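/- arXiv:2311.07542 — 4 statements merged into one kernel-verified Lean document; each statement's English description precedes it below -/
import Mathlib

section
/- Let n ≥ 2 and let Γ ⊂ ℝⁿ satisfy condition (C) with λ* = (1,−1,…,−1) ∈ Γ. Then every upper semi-continuous function v : ℝⁿ → [−∞,∞), v ≢ −∞, satisfying λ(A[v]) ∈ ℝⁿ∖Γ on ℝⁿ in the viscosity sense must be constant. -/
open Filter Topology MeasureTheory Metric Set
open scoped BigOperators ENNReal NNReal

noncomputable section

/-- `ℝⁿ` with the Euclidean norm. -/
abbrev Euc (n : ℕ) := EuclideanSpace ℝ (Fin n)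

/-- The positive cone `Γₙ = {λ : λᵢ > 0 ∀ i}`. -/
def GammaN (n : ℕ) : Set (Fin n → ℝ) := {lam | ∀ i, 0 < lam i}

/-- Condition (C): `Γ ⊊ ℝⁿ` is a nonempty open symmetric cone with vertex at the origin
satisfying `Γ + Γₙ ⊆ Γ`. -/
def CondC {n : ℕ} (Γ : Set (Fin n → ℝ)) : Prop :=
  Γ.Nonempty ∧ Γ ≠ Set.univ ∧ IsOpen Γ ∧
    (∀ σ : Equiv.Perm (Fin n), ∀ lam ∈ Γ, lam ∘ σ ∈ Γ) ∧
    (∀ lam ∈ Γ, ∀ t : ℝ, 0 < t → t • lam ∈ Γ) ∧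
    (∀ lam ∈ Γ, ∀ mu ∈ GammaN n, lam + mu ∈ Γ)

/-- `λ* = (1, -1, …, -1)`. -/
def lamStar (n : ℕ) : Fin n → ℝ := fun i => if i.val = 0 then 1 else -1

/-- Partial derivative `∂ᵢ v (x)`. -/
def pgrad {n : ℕ} (v : Euc n → ℝ) (x : Euc n) (i : Fin n) : ℝ :=
  fderiv ℝ v x (EuclideanSpace.single i 1)

/-- Second partial derivative `∂ᵢ∂ⱼ v (x)`. -/
def phess {n : ℕ} (v : Euc n → ℝ) (x : Euc n) (i j : Fin n) : ℝ :=
  fderiv ℝ (fun y => fderiv ℝ v y (EuclideanSpace.single j 1)) x (EuclideanSpace.single i 1)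

/-- The Möbius Hessian
`A[v](x) = e^{-2v(x)} (-∇²v + ∇v ⊗ ∇v - ½ |∇v|² I)` as a matrix. -/
def mobius {n : ℕ} (v : Euc n → ℝ) (x : Euc n) : Matrix (Fin n) (Fin n) ℝ :=
  Real.exp (-2 * v x) • Matrix.of fun i j =>
    - phess v x i j + pgrad v x i * pgrad v x j
      - (1 / 2) * (∑ k, (pgrad v x k) ^ 2) * (if i = j then (1 : ℝ) else 0)

/-- The (unordered, permutation-invariant) eigenvalue tuple of the symmetric matrix `M`
belongs to the (permutation-invariant) set `S`. -/
def EigIn {n : ℕ} (M : Matrix (Fin n) (Fin n) ℝ) (S : Set (Fin n → ℝ)) : Prop :=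
  ∃ hM : M.IsHermitian, hM.eigenvalues ∈ S

/-- Viscosity supersolution of `λ(A[v]) ∈ ∂Γ` in `Ω`, i.e. `λ(A[v]) ∈ closure Γ`
in the viscosity sense (for a real-valued `v`). -/
def Supersol {n : ℕ} (Γ : Set (Fin n → ℝ)) (Ω : Set (Euc n)) (v : Euc n → ℝ) : Prop :=
  ∀ x₀ ∈ Ω, ∀ φ : Euc n → ℝ, ContDiff ℝ 2 φ → φ x₀ = v x₀ →
    (∀ᶠ x in 𝓝[Ω] x₀, φ x ≤ v x) → EigIn (mobius φ x₀) (closure Γ)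

/-- Viscosity subsolution of `λ(A[v]) ∈ ∂Γ` in `Ω`, i.e. `λ(A[v]) ∈ ℝⁿ ∖ Γ`
in the viscosity sense (for a real-valued `v`). -/
def Subsol {n : ℕ} (Γ : Set (Fin n → ℝ)) (Ω : Set (Euc n)) (v : Euc n → ℝ) : Prop :=
  ∀ x₀ ∈ Ω, ∀ φ : Euc n → ℝ, ContDiff ℝ 2 φ → φ x₀ = v x₀ →
    (∀ᶠ x in 𝓝[Ω] x₀, v x ≤ φ x) → EigIn (mobius φ x₀) Γᶜ


/-- Viscosity supersolution of `λ(A[v]) ∈ ∂Γ` in `Ω`, i.e. `λ(A[v]) ∈ closure Γ` in the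
viscosity sense, for an extended-real-valued `v`. -/
def SupersolE {n : ℕ} (Γ : Set (Fin n → ℝ)) (Ω : Set (Euc n)) (v : Euc n → EReal) : Prop :=
  ∀ x₀ ∈ Ω, ∀ φ : Euc n → ℝ, ContDiff ℝ 2 φ → (φ x₀ : EReal) = v x₀ →
    (∀ᶠ x in 𝓝[Ω] x₀, (φ x : EReal) ≤ v x) → EigIn (mobius φ x₀) (closure Γ)

/-- Viscosity subsolution of `λ(A[v]) ∈ ∂Γ` in `Ω`, i.e. `λ(A[v]) ∈ ℝⁿ ∖ Γ` in the
viscosity sense, for an extended-real-valued `v`. -/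
def SubsolE {n : ℕ} (Γ : Set (Fin n → ℝ)) (Ω : Set (Euc n)) (v : Euc n → EReal) : Prop :=
  ∀ x₀ ∈ Ω, ∀ φ : Euc n → ℝ, ContDiff ℝ 2 φ → (φ x₀ : EReal) = v x₀ →
    (∀ᶠ x in 𝓝[Ω] x₀, v x ≤ (φ x : EReal)) → EigIn (mobius φ x₀) Γᶜ

/-- `v` is lowerconical at `x₀ ∈ Ω` (Caffarelli–Li–Nirenberg): either `v x₀ = +∞`, or
`v x₀ < +∞` and for every `ε > 0` and every smooth `η`,
`inf_{x ∈ Ω} ((v-η)(x) - (v-η)(x₀) - ε|x-x₀|) < 0`. -/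
def LowerConical {n : ℕ} (Ω : Set (Euc n)) (v : Euc n → EReal) (x₀ : Euc n) : Prop :=
  v x₀ = ⊤ ∨ (v x₀ ≠ ⊤ ∧ ∀ ε : ℝ, 0 < ε → ∀ η : Euc n → ℝ, ContDiff ℝ (⊤ : ℕ∞) η →
    ∃ x ∈ Ω, v x - (η x : EReal) <
      v x₀ - (η x₀ : EReal) + ((ε * ‖x - x₀‖ : ℝ) : EReal))

/-- `v` is upperconical at `x₀ ∈ Ω` iff `-v` is lowerconical at `x₀`. -/
def UpperConical {n : ℕ} (Ω : Set (Euc n)) (v : Euc n → EReal) (x₀ : Euc n) : Prop :=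
  LowerConical Ω (fun x => -(v x)) x₀

/-!
With `r = |x - x₀|`, the function `f(x) = -(2/α) log(1 - (r/R)^α)` has a Möbius Hessian whose
eigenvalues are a positive multiple of `(1 - α, -1, …, -1) = λ* - α e₁` on the punctured ball
`0 < r < R`. It vanishes at `x₀` and blows up at `r = R`, so if `v - f` exceeded `v x₀` somewhere in
the ball, then `v - f` would have a maximum point in the punctured ball, where a translate of `f`
touches `v` from above: impossible if `λ* - α e₁ ∈ Γ`. Hence `v ≤ v x₀ + f` in the ball, and
`R → ∞` gives `v ≤ v x₀` everywhere. Since `Γ` is open, `λ* ∈ Γ` leaves room for some `α > 0`.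
-/

theorem exists_perm_comp_eq_of_map_univ_eq {ι α : Type*} [Fintype ι] {f g : ι → α}
    (h : Finset.univ.val.map f = Finset.univ.val.map g) : ∃ σ : Equiv.Perm ι, g ∘ σ = f := by
  classical
  have hcard (c : α) : Fintype.card {i // f i = c} = Fintype.card {i // g i = c} := by
    have hcount := congrArg (Multiset.count c) h
    simpa only [Multiset.count_map, eq_comm (a := c), ← Finset.filter_val, Finset.card_val,
      ← Fintype.card_subtype] using hcount
  exact ⟨Equiv.ofFiberEquiv fun c => Fintype.equivOfCardEq (hcard c),
    funext fun i => Equiv.ofFiberEquiv_map _ i⟩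

theorem roots_charpoly_diagonal {ι A : Type*} [Fintype ι] [DecidableEq ι] [CommRing A] [IsDomain A]
    (d : ι → A) : (Matrix.diagonal d).charpoly.roots = Finset.univ.val.map d := by
  rw [Matrix.charpoly_diagonal, ← Polynomial.roots_multiset_prod_X_sub_C (Finset.univ.val.map d),
    Multiset.map_map]
  rfl

theorem Euc.dotProduct_self {n : ℕ} (u : Euc n) : (u : Fin n → ℝ) ⬝ᵥ u = ‖u‖ ^ 2 := by
  rw [EuclideanSpace.real_norm_sq_eq]
  simp [dotProduct, pow_two]

section Eigenvalues

variable {n : ℕ} {S : Set (Fin n → ℝ)}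

theorem EigIn.not_compl {M : Matrix (Fin n) (Fin n) ℝ} (h : EigIn M S) : ¬ EigIn M Sᶜ :=
  fun ⟨_, hcompl⟩ => hcompl h.2

theorem eigIn_of_charpoly_eq {M : Matrix (Fin n) (Fin n) ℝ} (hM : M.IsHermitian)
    (hperm : ∀ σ : Equiv.Perm (Fin n), ∀ lam ∈ S, lam ∘ σ ∈ S) {d : Fin n → ℝ}
    (hcharpoly : M.charpoly = (Matrix.diagonal d).charpoly) (hd : d ∈ S) : EigIn M S := by
  have hroots : Finset.univ.val.map hM.eigenvalues = Finset.univ.val.map d := by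
    rw [← roots_charpoly_diagonal d, ← hcharpoly]
    exact hM.roots_charpoly_eq_eigenvalues.symm
  obtain ⟨σ, hσ⟩ := exists_perm_comp_eq_of_map_univ_eq hroots
  exact ⟨hM, hσ ▸ hperm σ d hd⟩

theorem charpoly_smul_one_add_vecMulVec {ι A : Type*} [Fintype ι] [DecidableEq ι] [CommRing A]
    (p : A) (u w : ι → A) (i : ι) :
    (p • (1 : Matrix ι ι A) + Matrix.vecMulVec u w).charpoly =
      (Matrix.diagonal (Function.const ι p + Pi.single i (u ⬝ᵥ w))).charpoly := by
  have hshift (u w : ι → A) : (p • (1 : Matrix ι ι A) + Matrix.vecMulVec u w).charpoly =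
      (Matrix.vecMulVec u w).charpoly.comp (Polynomial.X + Polynomial.C (-p)) := by
    rw [← Matrix.charpoly_sub_scalar, map_neg, sub_neg_eq_add, add_comm,
      Matrix.scalar_apply, ← Matrix.smul_one_eq_diagonal]
  have hdiag : Matrix.diagonal (Function.const ι p + Pi.single i (u ⬝ᵥ w)) =
      p • (1 : Matrix ι ι A) + Matrix.vecMulVec (Pi.single i (u ⬝ᵥ w)) (Pi.single i 1) := by
    ext j k
    simp only [Matrix.diagonal_apply, Matrix.add_apply, Matrix.smul_apply, Matrix.one_apply,
      Matrix.vecMulVec_apply, Pi.add_apply, Pi.single_apply, Function.const_apply, smul_eq_mul]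
    grind
  rw [hdiag, hshift, hshift]
  simp only [Matrix.charpoly_vecMulVec, single_dotProduct, Pi.single_eq_same, mul_one]

theorem eigIn_smul_one_add_smul_vecMulVec
    (hperm : ∀ σ : Equiv.Perm (Fin n), ∀ lam ∈ S, lam ∘ σ ∈ S) {p q : ℝ} {u : Fin n → ℝ} {i : Fin n}
    (h : Function.const (Fin n) p + Pi.single i (q * (u ⬝ᵥ u)) ∈ S) :
    EigIn (p • (1 : Matrix (Fin n) (Fin n) ℝ) + q • Matrix.vecMulVec u u) S := by
  have hherm : (p • (1 : Matrix (Fin n) (Fin n) ℝ) + q • Matrix.vecMulVec u u).IsHermitian := by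
    ext j k
    simp [Matrix.vecMulVec_apply, Matrix.one_apply, eq_comm, mul_comm (u j)]
  refine eigIn_of_charpoly_eq hherm hperm ?_ h
  rw [← Matrix.smul_vecMulVec, charpoly_smul_one_add_vecMulVec p (q • u) u i, smul_dotProduct,
    smul_eq_mul]

end Eigenvalues

section Mobius

variable {n : ℕ}

theorem mobius_congr {φ χ : Euc n → ℝ} {x : Euc n} (h : φ =ᶠ[𝓝 x] χ) :
    mobius φ x = mobius χ x := by
  have hgrad (i : Fin n) : pgrad φ x i = pgrad χ x i := by rw [pgrad, pgrad, h.fderiv_eq]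
  have hhess (i j : Fin n) : phess φ x i j = phess χ x i j := by
    have hpartial : (fun y => fderiv ℝ φ y (EuclideanSpace.single j 1)) =ᶠ[𝓝 x]
        fun y => fderiv ℝ χ y (EuclideanSpace.single j 1) :=
      (h.fderiv (𝕜 := ℝ)).mono fun y hy => DFunLike.congr_fun hy _
    rw [phess, phess, hpartial.fderiv_eq]
  simp only [mobius, hgrad, hhess, h.eq_of_nhds]

theorem hasFDerivAt_norm_sub_sq (x₀ y : Euc n) :
    HasFDerivAt (fun x : Euc n => ‖x - x₀‖ ^ 2) (2 • innerSL ℝ (y - x₀)) y := by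
  simpa using ((hasFDerivAt_id y).sub_const x₀).norm_sq

theorem innerSL_apply_single (u : Euc n) (i : Fin n) :
    innerSL ℝ u (EuclideanSpace.single i 1) = u i := by
  simp [EuclideanSpace.inner_single_right]

theorem pgrad_radial {ψ : ℝ → ℝ} {ψ' : ℝ} {x₀ y : Euc n} (hψ : HasDerivAt ψ ψ' (‖y - x₀‖ ^ 2))
    (i : Fin n) : pgrad (fun x => ψ (‖x - x₀‖ ^ 2)) y i = 2 * ψ' * (y - x₀) i := by
  have hcomp := hψ.comp_hasFDerivAt y (hasFDerivAt_norm_sub_sq x₀ y)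
  simp only [Function.comp_def] at hcomp
  rw [pgrad, hcomp.fderiv]
  simp only [smul_apply, innerSL_apply_single, nsmul_eq_mul, Nat.cast_ofNat,
    smul_eq_mul]
  ring

theorem phess_radial {ψ ψ' : ℝ → ℝ} {ψ'' : ℝ} {x₀ y : Euc n}
    (hψ : ∀ᶠ t in 𝓝 (‖y - x₀‖ ^ 2), HasDerivAt ψ (ψ' t) t)
    (hψ' : HasDerivAt ψ' ψ'' (‖y - x₀‖ ^ 2)) (i j : Fin n) :
    phess (fun x => ψ (‖x - x₀‖ ^ 2)) y i j =
      2 * ψ' (‖y - x₀‖ ^ 2) * (if i = j then 1 else 0) +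
        4 * ψ'' * ((y - x₀) i * (y - x₀) j) := by
  have hcont : Tendsto (fun x : Euc n => ‖x - x₀‖ ^ 2) (𝓝 y) (𝓝 (‖y - x₀‖ ^ 2)) :=
    (hasFDerivAt_norm_sub_sq x₀ y).continuousAt
  have hgrad : (fun x => fderiv ℝ (fun x => ψ (‖x - x₀‖ ^ 2)) x (EuclideanSpace.single j 1))
      =ᶠ[𝓝 y] fun x => 2 * ψ' (‖x - x₀‖ ^ 2) * (x - x₀) j :=
    (hcont.eventually hψ).mono fun x hx => pgrad_radial hx j
  have hcoord : HasFDerivAt (fun x : Euc n => (x - x₀) j)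
      (EuclideanSpace.proj j : Euc n →L[ℝ] ℝ) y :=
    (EuclideanSpace.proj j : Euc n →L[ℝ] ℝ).hasFDerivAt.sub_const (x₀ j)
  have hcomp := hψ'.comp_hasFDerivAt y (hasFDerivAt_norm_sub_sq x₀ y)
  have hderiv := (hcomp.const_mul 2).fun_mul hcoord
  simp only [Function.comp_def] at hderiv
  rw [phess, hgrad.fderiv_eq, hderiv.fderiv]
  simp only [add_apply, smul_apply, PiLp.proj_apply, PiLp.single_apply, innerSL_apply_single,
    nsmul_eq_mul, Nat.cast_ofNat, smul_eq_mul, eq_comm (a := j)]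
  ring

theorem mobius_radial {ψ ψ' : ℝ → ℝ} {ψ'' : ℝ} {x₀ y : Euc n}
    (hψ : ∀ᶠ t in 𝓝 (‖y - x₀‖ ^ 2), HasDerivAt ψ (ψ' t) t)
    (hψ' : HasDerivAt ψ' ψ'' (‖y - x₀‖ ^ 2)) :
    mobius (fun x => ψ (‖x - x₀‖ ^ 2)) y = Real.exp (-2 * ψ (‖y - x₀‖ ^ 2)) •
      ((-2 * (ψ' (‖y - x₀‖ ^ 2) + ‖y - x₀‖ ^ 2 * ψ' (‖y - x₀‖ ^ 2) ^ 2)) •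
          (1 : Matrix (Fin n) (Fin n) ℝ) +
        (4 * (ψ' (‖y - x₀‖ ^ 2) ^ 2 - ψ'')) • Matrix.vecMulVec (y - x₀) (y - x₀)) := by
  have hnorm : ∑ k, (y - x₀) k ^ 2 = ‖y - x₀‖ ^ 2 := (EuclideanSpace.real_norm_sq_eq _).symm
  ext i j
  simp only [mobius, Matrix.smul_apply, Matrix.of_apply, Matrix.add_apply, Matrix.one_apply,
    Matrix.vecMulVec_apply, pgrad_radial hψ.self_of_nhds, phess_radial hψ hψ', smul_eq_mul,
    mul_pow, ← Finset.mul_sum, hnorm]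
  ring

end Mobius

theorem exists_contDiff_eventuallyEq_of_contDiffAt {E F : Type*} [NormedAddCommGroup E]
    [NormedSpace ℝ E] [HasContDiffBump E] [NormedAddCommGroup F] [NormedSpace ℝ F] {f : E → F}
    {x : E} {k : ℕ} (hf : ContDiffAt ℝ k f x) : ∃ g : E → F, ContDiff ℝ k g ∧ g =ᶠ[𝓝 x] f := by
  obtain ⟨r, hr, hball⟩ := nhds_basis_closedBall.eventually_iff.1 (hf.eventually (by simp))
  let χ : ContDiffBump x := ⟨r / 2, r, half_pos hr, half_lt_self hr⟩
  refine ⟨fun y => χ y • f y, ?_, χ.eventuallyEq_one.mono fun y hy => by simp [hy]⟩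
  refine contMDiff_iff_contDiff.1 (contMDiff_of_tsupport fun y hy => ?_)
  have hyr : y ∈ closedBall x r := χ.tsupport_eq ▸ tsupport_smul_subset_left χ f hy
  exact (χ.contDiffAt.smul (hball hyr)).contMDiffAt

theorem SubsolE.eigIn_compl_of_contDiffAt {n : ℕ} {Γ : Set (Fin n → ℝ)} {Ω : Set (Euc n)}
    {v : Euc n → EReal} (hsub : SubsolE Γ Ω v) {x : Euc n} (hx : x ∈ Ω) {φ : Euc n → ℝ}
    (hφ : ContDiffAt ℝ 2 φ x) (heq : (φ x : EReal) = v x)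
    (hle : ∀ᶠ y in 𝓝[Ω] x, v y ≤ φ y) : EigIn (mobius φ x) Γᶜ := by
  obtain ⟨χ, hχ, hχφ⟩ := exists_contDiff_eventuallyEq_of_contDiffAt (k := 2) hφ
  rw [← mobius_congr hχφ]
  refine hsub x hx χ hχ (by rw [hχφ.eq_of_nhds, heq]) ?_
  filter_upwards [hle, hχφ.filter_mono nhdsWithin_le_nhds] with y hy hχy
  rwa [hχy]

/-- The radial barrier `-(2/α) log(1 - (r/R)^α)` on a ball of radius `R`, as a function of `t = r²`
so that `t ↦ t^(α/2)` at `0` carries its only singularity in the ball. It is meaningful only for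
`0 ≤ t < R²`: outside this range `Real.log` and `Real.rpow` return junk values. -/
def barrier (α R t : ℝ) : ℝ := -(2 / α) * Real.log (1 - (t / R ^ 2) ^ (α / 2))

/-- The logarithmic slope `t ∂ₜ barrier α R t`. -/
def barrierSlope (α R t : ℝ) : ℝ := (t / R ^ 2) ^ (α / 2) / (1 - (t / R ^ 2) ^ (α / 2))

section Barrier

variable {α R t : ℝ}

theorem barrier_zero (hα : α ≠ 0) : barrier α R 0 = 0 := by
  simp [barrier, hα]

theorem rpow_div_sq_lt_one (hα : 0 < α) (ht : 0 ≤ t) (htR : t < R ^ 2) :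
    (t / R ^ 2) ^ (α / 2) < 1 :=
  Real.rpow_lt_one (by positivity) ((div_lt_one (ht.trans_lt htR)).2 htR) (half_pos hα)

theorem continuousOn_barrier (hα : 0 < α) : ContinuousOn (barrier α R) (Ico 0 (R ^ 2)) := by
  have hpow : Continuous fun t : ℝ => (t / R ^ 2) ^ (α / 2) :=
    (Real.continuous_rpow_const (half_pos hα).le).comp (continuous_id.div_const _)
  exact continuousOn_const.mul <| (continuousOn_const.sub hpow.continuousOn).log fun t ht =>
    (sub_pos.2 (rpow_div_sq_lt_one hα ht.1 ht.2)).ne'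

theorem contDiffAt_barrier {k : WithTop ℕ∞} (hα : 0 < α) (ht : 0 < t) (htR : t < R ^ 2) :
    ContDiffAt ℝ k (barrier α R) t := by
  have hpow : ContDiffAt ℝ k (fun t : ℝ => (t / R ^ 2) ^ (α / 2)) t :=
    (contDiffAt_id.div_const _).rpow_const_of_ne (div_pos ht (ht.trans htR)).ne'
  exact contDiffAt_const.mul <| (contDiffAt_const.sub hpow).log
    (sub_pos.2 (rpow_div_sq_lt_one hα ht.le htR)).ne'

theorem hasDerivAt_rpow_div_sq (hR : R ≠ 0) (ht : 0 < t) (β : ℝ) :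
    HasDerivAt (fun t => (t / R ^ 2) ^ β) (β * (t / R ^ 2) ^ β / t) t := by
  have htR : 0 < t / R ^ 2 := by positivity
  have hdiv : HasDerivAt (fun t => t / R ^ 2) (1 / R ^ 2) t := (hasDerivAt_id' t).div_const _
  refine (hdiv.rpow_const (p := β) (Or.inl htR.ne')).congr_deriv ?_
  rw [Real.rpow_sub_one htR.ne']
  field_simp

theorem barrierSlope_pos (hα : 0 < α) (ht : 0 < t) (htR : t < R ^ 2) : 0 < barrierSlope α R t :=
  div_pos (Real.rpow_pos_of_pos (div_pos ht (ht.trans htR)) _)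
    (sub_pos.2 (rpow_div_sq_lt_one hα ht.le htR))

theorem hasDerivAt_barrier (hα : 0 < α) (ht : 0 < t) (htR : t < R ^ 2) :
    HasDerivAt (barrier α R) (barrierSlope α R t / t) t := by
  have hR : R ≠ 0 := (pow_ne_zero_iff two_ne_zero).1 (ht.trans htR).ne'
  have hlt : 0 < 1 - (t / R ^ 2) ^ (α / 2) := sub_pos.2 (rpow_div_sq_lt_one hα ht.le htR)
  refine ((((hasDerivAt_rpow_div_sq hR ht (α / 2)).const_sub 1).log hlt.ne').const_mul
    (-(2 / α))).congr_deriv ?_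
  rw [barrierSlope]
  field_simp

theorem hasDerivAt_barrierSlope (hα : 0 < α) (ht : 0 < t) (htR : t < R ^ 2) :
    HasDerivAt (barrierSlope α R)
      (α / 2 * (barrierSlope α R t * (1 + barrierSlope α R t)) / t) t := by
  have hR : R ≠ 0 := (pow_ne_zero_iff two_ne_zero).1 (ht.trans htR).ne'
  have hlt : 0 < 1 - (t / R ^ 2) ^ (α / 2) := sub_pos.2 (rpow_div_sq_lt_one hα ht.le htR)
  have hpow := hasDerivAt_rpow_div_sq hR ht (α / 2)
  refine (hpow.fun_div (hpow.const_sub 1) hlt.ne').congr_deriv ?_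
  rw [barrierSlope]
  field_simp
  ring

theorem tendsto_barrier_sq_nhdsLT (hα : 0 < α) (hR : 0 < R) :
    Tendsto (fun r => barrier α R (r ^ 2)) (𝓝[<] R) atTop := by
  have hlim : Tendsto (fun r => 1 - (r ^ 2 / R ^ 2) ^ (α / 2)) (𝓝[<] R) (𝓝[>] 0) := by
    refine tendsto_nhdsWithin_iff.2 ⟨tendsto_nhdsWithin_of_tendsto_nhds ?_, ?_⟩
    · have hcont : ContinuousAt (fun r : ℝ => 1 - (r ^ 2 / R ^ 2) ^ (α / 2)) R := by
        have := hα.le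
        fun_prop (disch := first | positivity | (right; positivity))
      simpa [ContinuousAt, hR.ne'] using hcont
    · filter_upwards [Ioo_mem_nhdsLT hR] with r hr
      exact sub_pos.2 (rpow_div_sq_lt_one hα (sq_nonneg r) (by gcongr; exacts [hr.1.le, hr.2]))
  exact (Real.tendsto_log_nhdsGT_zero.comp hlim).const_mul_atBot_of_neg
    (neg_lt_zero.2 (by positivity))

theorem tendsto_barrier_radius_atTop (hα : 0 < α) (t : ℝ) :
    Tendsto (fun R => barrier α R t) atTop (𝓝 0) := by
  have hdiv : Tendsto (fun R : ℝ => t / R ^ 2) atTop (𝓝 0) :=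
    (tendsto_pow_atTop two_ne_zero).const_div_atTop t
  have hpow := hdiv.rpow_const (p := α / 2) (Or.inr (half_pos hα).le)
  rw [Real.zero_rpow (half_pos hα).ne'] at hpow
  simpa [barrier] using ((hpow.const_sub 1).log (by norm_num)).const_mul (-(2 / α))

end Barrier

section Cone

variable {n : ℕ} {Γ : Set (Fin n → ℝ)}

theorem lamStar_sub_single [NeZero n] (α : ℝ) :
    lamStar n - Pi.single 0 α = Function.const (Fin n) (-1) + Pi.single 0 (2 - α) := by
  ext i
  simp only [lamStar, Pi.sub_apply, Pi.add_apply, Pi.single_apply, Function.const_apply,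
    Fin.val_eq_zero_iff]
  split_ifs <;> ring

theorem exists_pos_lamStar_sub_single_mem [NeZero n] (hopen : IsOpen Γ) (hstar : lamStar n ∈ Γ) :
    ∃ α : ℝ, 0 < α ∧ lamStar n - Pi.single 0 α ∈ Γ := by
  have hcont : Continuous fun α : ℝ => lamStar n - Pi.single 0 α :=
    continuous_const.sub (continuous_single (A := fun _ => ℝ) 0)
  have hmem : ∀ᶠ α in 𝓝 (0 : ℝ), lamStar n - Pi.single 0 α ∈ Γ :=
    hcont.continuousAt.eventually_mem (hopen.mem_nhds (by simpa using hstar))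
  obtain ⟨α, hαΓ, hα⟩ :=
    ((hmem.filter_mono nhdsWithin_le_nhds).and (self_mem_nhdsWithin (s := Ioi 0))).exists
  exact ⟨α, hα, hαΓ⟩

theorem norm_sub_sq_mem_Ioo {E : Type*} [NormedAddCommGroup E] {x y : E} {R : ℝ} (hy : y ≠ x)
    (hyR : y ∈ ball x R) : ‖y - x‖ ^ 2 ∈ Ioo 0 (R ^ 2) := by
  have hpos := norm_sub_pos_iff.2 hy
  exact ⟨by positivity, by gcongr; exact mem_ball_iff_norm.1 hyR⟩

theorem eigIn_mobius_const_add_barrier [NeZero n]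
    (hperm : ∀ σ : Equiv.Perm (Fin n), ∀ lam ∈ Γ, lam ∘ σ ∈ Γ)
    (hcone : ∀ lam ∈ Γ, ∀ t : ℝ, 0 < t → t • lam ∈ Γ) {α : ℝ} (hα : 0 < α)
    (hαΓ : lamStar n - Pi.single 0 α ∈ Γ) {R : ℝ} {x₀ y : Euc n} (hy : y ≠ x₀)
    (hyR : y ∈ ball x₀ R) (a : ℝ) :
    EigIn (mobius (fun x => a + barrier α R (‖x - x₀‖ ^ 2)) y) Γ := by
  obtain ⟨hs, hsR⟩ := norm_sub_sq_mem_Ioo hy hyR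
  have hψ : ∀ᶠ t in 𝓝 (‖y - x₀‖ ^ 2),
      HasDerivAt (fun t => a + barrier α R t) (barrierSlope α R t / t) t := by
    filter_upwards [Ioo_mem_nhds hs hsR] with t ht
    exact (hasDerivAt_barrier hα ht.1 ht.2).const_add a
  have hψ' := (hasDerivAt_barrierSlope hα hs hsR).fun_div (hasDerivAt_id' _) hs.ne'
  have hQ := barrierSlope_pos hα hs hsR
  rw [mobius_radial hψ hψ', smul_add, smul_smul, smul_smul]
  refine eigIn_smul_one_add_smul_vecMulVec (i := 0) hperm ?_
  rw [Euc.dotProduct_self]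
  set s := ‖y - x₀‖ ^ 2
  set Q := barrierSlope α R s
  set c := Real.exp (-2 * (a + barrier α R s))
  set T := 2 * (Q + Q ^ 2) / s with hT
  have htangential : -2 * (Q / s + s * (Q / s) ^ 2) = -T := by
    rw [hT]
    field_simp
  have hradial : 4 * ((Q / s) ^ 2 - (α / 2 * (Q * (1 + Q)) / s * s - Q * 1) / s ^ 2) * s =
      (2 - α) * T := by
    rw [hT]
    field_simp
    ring
  have hspectrum : Function.const (Fin n) (c * -T) + Pi.single 0 (c * ((2 - α) * T)) =
      (c * T) • (lamStar n - Pi.single 0 α) := by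
    rw [lamStar_sub_single, smul_add, ← Pi.single_smul, smul_eq_mul,
      show c * ((2 - α) * T) = c * T * (2 - α) by ring]
    congr 1
    ext
    simp
  rw [htangential, mul_assoc c, hradial, hspectrum]
  exact hcone _ hαΓ _ (by positivity)

end Cone

section Maxima

theorem exists_forall_le_coe_of_isCompact {X : Type*} [TopologicalSpace X] {K : Set X}
    (hK : IsCompact K) {v : X → EReal} (hv : UpperSemicontinuousOn v K) (hlt : ∀ x ∈ K, v x < ⊤) :
    ∃ N : ℝ, ∀ x ∈ K, v x ≤ N := by
  obtain rfl | hne := K.eq_empty_or_nonempty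
  · exact ⟨0, by simp⟩
  obtain ⟨x, hx, hmax⟩ := hv.exists_isMaxOn hne hK
  exact ⟨(v x).toReal, fun y hy => (hmax hy).trans (EReal.le_coe_toReal (hlt x hx).ne)⟩

variable {X : Type*} [PseudoMetricSpace X] [ProperSpace X] {x₀ x₁ : X} {R : ℝ}

theorem exists_isMaxOn_ball {β : Type*} [LinearOrder β] {w : X → β}
    (hw : UpperSemicontinuousOn w (ball x₀ R)) (hx₁ : x₁ ∈ ball x₀ R)
    (hle : ∀ᶠ x in comap (dist · x₀) (𝓝[<] R), w x ≤ w x₁) :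
    ∃ y ∈ ball x₀ R, IsMaxOn w (ball x₀ R) y := by
  obtain ⟨l, hl, hle⟩ := (mem_nhdsLT_iff_exists_Ioo_subset).1 (eventually_comap.1 hle)
  set ρ := max l (dist x₁ x₀)
  have hsub : closedBall x₀ ρ ⊆ ball x₀ R := closedBall_subset_ball (max_lt hl hx₁)
  have hx₁ρ : x₁ ∈ closedBall x₀ ρ := mem_closedBall.2 (le_max_right _ _)
  obtain ⟨y, hy, hmax⟩ := (hw.mono hsub).exists_isMaxOn ⟨x₁, hx₁ρ⟩ (isCompact_closedBall x₀ ρ)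
  refine ⟨y, hsub hy, fun x hx => ?_⟩
  obtain hxρ | hxρ := le_or_gt (dist x x₀) ρ
  · exact hmax hxρ
  · exact (hle ⟨(le_max_left _ _).trans_lt hxρ, hx⟩ x rfl).trans (hmax hx₁ρ)

theorem upperSemicontinuousOn_sub_coe {Y : Type*} [TopologicalSpace Y] {s : Set Y} {v : Y → EReal}
    {f : Y → ℝ} (hv : UpperSemicontinuousOn v s) (hf : ContinuousOn f s) :
    UpperSemicontinuousOn (fun x => v x - f x) s := by
  have hneg : ContinuousOn (fun x => ((-f x : ℝ) : EReal)) s :=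
    continuous_coe_real_ereal.comp_continuousOn hf.neg
  exact hv.add' hneg.upperSemicontinuousOn fun x _ =>
    EReal.continuousAt_add (Or.inr (EReal.coe_ne_bot _)) (Or.inr (EReal.coe_ne_top _))

theorem exists_isMaxOn_sub_ball {v : X → EReal} {f : X → ℝ} {N : ℝ}
    (hv : UpperSemicontinuousOn v (ball x₀ R)) (hN : ∀ x ∈ ball x₀ R, v x ≤ N)
    (hf : ContinuousOn f (ball x₀ R)) (hlim : Tendsto f (comap (dist · x₀) (𝓝[<] R)) atTop)
    (hx₁ : x₁ ∈ ball x₀ R) (hbot : v x₁ ≠ ⊥) :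
    ∃ y ∈ ball x₀ R, IsMaxOn (fun x => v x - f x) (ball x₀ R) y := by
  obtain ⟨m, hm⟩ : ∃ m : ℝ, (m : EReal) = v x₁ :=
    ⟨_, EReal.coe_toReal ((hN x₁ hx₁).trans_lt (EReal.coe_lt_top N)).ne hbot⟩
  refine exists_isMaxOn_ball (upperSemicontinuousOn_sub_coe hv hf) hx₁ ?_
  have hball : ∀ᶠ x in comap (dist · x₀) (𝓝[<] R), x ∈ ball x₀ R :=
    tendsto_comap.eventually self_mem_nhdsWithin
  filter_upwards [hball, hlim.eventually_ge_atTop (N - (m - f x₁))] with x hx hfx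
  calc v x - f x ≤ (N : EReal) - f x := EReal.sub_le_sub (hN x hx) le_rfl
    _ ≤ (m : EReal) - f x₁ := by
      rw [← EReal.coe_sub, ← EReal.coe_sub, EReal.coe_le_coe_iff]
      linarith
    _ = v x₁ - f x₁ := by rw [hm]

end Maxima

section Liouville

variable {n : ℕ} {Γ : Set (Fin n → ℝ)} {Ω : Set (Euc n)} {v : Euc n → EReal} {α R : ℝ} {x₀ : Euc n}

theorem continuousOn_barrier_norm_sub_sq (hα : 0 < α) :
    ContinuousOn (fun x => barrier α R (‖x - x₀‖ ^ 2)) (ball x₀ R) :=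
  (continuousOn_barrier hα).comp (by fun_prop) fun x hx =>
    ⟨by positivity, by gcongr; exact mem_ball_iff_norm.1 hx⟩

theorem tendsto_barrier_norm_sub_sq (hα : 0 < α) (hR : 0 < R) :
    Tendsto (fun x => barrier α R (‖x - x₀‖ ^ 2)) (comap (dist · x₀) (𝓝[<] R)) atTop := by
  simp only [← dist_eq_norm]
  exact (tendsto_barrier_sq_nhdsLT hα hR).comp tendsto_comap

theorem SubsolE.not_isLocalMaxOn_sub_barrier [NeZero n]
    (hperm : ∀ σ : Equiv.Perm (Fin n), ∀ lam ∈ Γ, lam ∘ σ ∈ Γ)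
    (hcone : ∀ lam ∈ Γ, ∀ t : ℝ, 0 < t → t • lam ∈ Γ) (hα : 0 < α)
    (hαΓ : lamStar n - Pi.single 0 α ∈ Γ) (hsub : SubsolE Γ Ω v) {y : Euc n} (hyΩ : y ∈ Ω)
    (hy : y ≠ x₀) (hyR : y ∈ ball x₀ R) (htop : v y ≠ ⊤) (hbot : v y ≠ ⊥) :
    ¬ IsLocalMaxOn (fun x => v x - barrier α R (‖x - x₀‖ ^ 2)) Ω y := by
  intro hmax
  obtain ⟨m, hm⟩ : ∃ m : ℝ, (m : EReal) = v y := ⟨_, EReal.coe_toReal htop hbot⟩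
  set a := m - barrier α R (‖y - x₀‖ ^ 2) with ha
  refine (eigIn_mobius_const_add_barrier hperm hcone hα hαΓ hy hyR a).not_compl
    (hsub.eigIn_compl_of_contDiffAt hyΩ ?_ ?_ ?_)
  · have hnorm : ContDiffAt ℝ 2 (fun x => ‖x - x₀‖ ^ 2) y :=
      (contDiffAt_id.sub contDiffAt_const).norm_sq ℝ
    obtain ⟨hs, hsR⟩ := norm_sub_sq_mem_Ioo hy hyR
    exact contDiffAt_const.add <|
      ContDiffAt.comp (g := barrier α R) y (contDiffAt_barrier hα hs hsR) hnorm
  · rw [← hm, ha, sub_add_cancel]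
  · filter_upwards [hmax] with x hx
    rw [← hm, ← EReal.coe_sub, ← ha] at hx
    rw [EReal.coe_add]
    exact (EReal.sub_le_iff_le_add (Or.inl (EReal.coe_ne_bot _))
      (Or.inl (EReal.coe_ne_top _))).1 hx

theorem SubsolE.le_add_barrier [NeZero n]
    (hperm : ∀ σ : Equiv.Perm (Fin n), ∀ lam ∈ Γ, lam ∘ σ ∈ Γ)
    (hcone : ∀ lam ∈ Γ, ∀ t : ℝ, 0 < t → t • lam ∈ Γ) (hα : 0 < α)
    (hαΓ : lamStar n - Pi.single 0 α ∈ Γ) (hΩ : closedBall x₀ R ⊆ Ω)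
    (husc : UpperSemicontinuousOn v Ω) (hlt : ∀ x ∈ Ω, v x < ⊤) (hsub : SubsolE Γ Ω v)
    {x : Euc n} (hx : x ∈ ball x₀ R) :
    v x ≤ v x₀ + (barrier α R (‖x - x₀‖ ^ 2) : ℝ) := by
  by_contra! hgt
  have hball : ball x₀ R ⊆ Ω := ball_subset_closedBall.trans hΩ
  obtain ⟨N, hN⟩ := exists_forall_le_coe_of_isCompact (isCompact_closedBall x₀ R)
    (husc.mono hΩ) fun y hy => hlt y (hΩ hy)
  obtain ⟨y, hy, hmax⟩ := exists_isMaxOn_sub_ball (husc.mono hball)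
    (fun y hy => hN y (ball_subset_closedBall hy)) (continuousOn_barrier_norm_sub_sq hα)
    (tendsto_barrier_norm_sub_sq hα (pos_of_mem_ball hx)) hx hgt.ne_bot
  have hlt_max : v x₀ < v y - barrier α R (‖y - x₀‖ ^ 2) :=
    (EReal.lt_sub_iff_add_lt (Or.inl (EReal.coe_ne_bot _))
      (Or.inl (EReal.coe_ne_top _))).2 hgt |>.trans_le (hmax hx)
  have hyx₀ : y ≠ x₀ := by
    rintro rfl
    simp [barrier_zero hα.ne'] at hlt_max
  have hbot : v y ≠ ⊥ := by
    intro hy_bot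
    simp [hy_bot] at hlt_max
  exact hsub.not_isLocalMaxOn_sub_barrier hperm hcone hα hαΓ (hball hy) hyx₀ hy
    (hlt y (hball hy)).ne hbot ((hmax.isLocalMax (isOpen_ball.mem_nhds hy)).on Ω)

theorem liouville_subsolutions_general [NeZero n]
    (hperm : ∀ σ : Equiv.Perm (Fin n), ∀ lam ∈ Γ, lam ∘ σ ∈ Γ)
    (hcone : ∀ lam ∈ Γ, ∀ t : ℝ, 0 < t → t • lam ∈ Γ) (hα : 0 < α)
    (hαΓ : lamStar n - Pi.single 0 α ∈ Γ) (husc : UpperSemicontinuous v) (hne : ∀ x, v x < ⊤)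
    (hsub : SubsolE Γ univ v) (x y : Euc n) : v x = v y := by
  suffices hle : ∀ x₀ x : Euc n, v x ≤ v x₀ from le_antisymm (hle y x) (hle x y)
  intro x₀ x
  have hbound : ∀ᶠ R in atTop, v x ≤ v x₀ + (barrier α R (‖x - x₀‖ ^ 2) : ℝ) := by
    filter_upwards [eventually_gt_atTop (dist x x₀)] with R hR
    exact hsub.le_add_barrier hperm hcone hα hαΓ (subset_univ _) (husc.upperSemicontinuousOn univ)
      (fun x _ => hne x) hR
  have hbarrier : Tendsto (fun R => ((barrier α R (‖x - x₀‖ ^ 2) : ℝ) : EReal)) atTop (𝓝 0) :=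
    EReal.tendsto_coe.2 (tendsto_barrier_radius_atTop hα _)
  have hadd : ContinuousAt (fun p : EReal × EReal => p.1 + p.2) (v x₀, 0) :=
    EReal.continuousAt_add (Or.inr EReal.zero_ne_bot) (Or.inr EReal.zero_ne_top)
  simpa using ge_of_tendsto (hadd.tendsto.comp (tendsto_const_nhds.prodMk_nhds hbarrier)) hbound

end Liouville

/-- **Liouville theorem for subsolutions** (Theorem 6.2): for `n ≥ 2` and a cone `Γ`
satisfying condition (C) with `λ* ∈ Γ`, every upper semi-continuous `v : ℝⁿ → [-∞, ∞)`,
`v ≢ -∞`, satisfying `λ(A[v]) ∈ ℝⁿ ∖ Γ` on `ℝⁿ` in the viscosity sense is constant. -/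
theorem liouville_subsolutions
    {n : ℕ} (hn : 2 ≤ n) (Γ : Set (Fin n → ℝ)) (hΓ : CondC Γ)
    (hstar : lamStar n ∈ Γ)
    (v : Euc n → EReal) (husc : UpperSemicontinuous v)
    (hne : ∀ x, v x < ⊤) (hnbot : ∃ x, v x ≠ ⊥)
    (hsub : SubsolE Γ Set.univ v) :
    ∀ x y : Euc n, v x = v y := by
  have : NeZero n := ⟨by omega⟩
  obtain ⟨-, -, hopen, hperm, hcone, -⟩ := hΓ
  obtain ⟨α, hα, hαΓ⟩ := exists_pos_lamStar_sub_single_mem hopen hstar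
  exact liouville_subsolutions_general hperm hcone hα hαΓ husc hne hsub
end
end

section
/- Let n ≥ 2 and μ ∈ [0,∞). For λ ∈ ℝⁿ write λ₍₁₎ ≥ λ₍₂₎ ≥ … ≥ λ₍ₙ₎ for the decreasing rearrangement of the coordinates of λ. (a) The cone Γ̂_μ := {λ ∈ ℝⁿ : λ₍₁₎ + μ·λ₍₂₎ > 0} satisfies condition (C), (μ,−1,…,−1) ∈ ∂Γ̂_μ, and every cone Γ satisfying condition (C) with (μ,−1,…,−1) ∈ ∂Γ is contained in Γ̂_μ. (b) The cone Γ̌_μ := {λ ∈ ℝⁿ : λ₍ₙ₎ + μ·λ₍ₙ₋₁₎ > 0} satisfies condition (C), (−μ,1,…,1) ∈ ∂Γ̌_μ, and every cone Γ satisfying condition (C) with (−μ,1,…,1) ∈ ∂Γ contains Γ̌_μ. -/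
open Filter Topology MeasureTheory Metric Set
open scoped BigOperators ENNReal NNReal

noncomputable section

/-- The decreasing rearrangement of `lam : Fin n → ℝ`: `dsort lam 0 ≥ dsort lam 1 ≥ …`. -/
def dsort {n : ℕ} (lam : Fin n → ℝ) : Fin n → ℝ :=
  fun k => lam (Tuple.sort lam k.rev)

/-!
The order statistics `x ↦ x₍ₖ₎` are monotone and commute with adding a constant, hence continuous,
so an ordered weighted sum with nonnegative weights, not all zero, is positive on a cone satisfying
(C). If `x ∈ Γ` violates `x₍₁₎ + μ x₍₂₎ > 0`, then `x₍₂₎ ≤ 0` and the decreasing rearrangement of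
`x` lies below `-x₍₂₎ • (μ, -1, …, -1)`, which forces `(μ, -1, …, -1)` into the upper set `Γ`; this
is the maximality in (a). The map `Γ ↦ -(closure Γ)ᶜ` is an order-reversing involution on the cones
satisfying (C). It exchanges the two extremal cones and reflects boundaries, so (b) is (a) read
through it.
-/

section DecreasingRearrangement

variable {n : ℕ} (x : Fin n → ℝ)

lemma dsort_antitone : Antitone (dsort x) :=
  fun _ _ h => Tuple.monotone_sort x (Fin.rev_le_rev.mpr h)

lemma exists_perm_dsort_eq : ∃ σ : Equiv.Perm (Fin n), dsort x = x ∘ σ :=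
  ⟨Fin.revPerm.trans (Tuple.sort x), rfl⟩

variable {x}

lemma dsort_eq_comp_of_antitone {σ : Equiv.Perm (Fin n)} (hσ : Antitone (x ∘ σ)) :
    dsort x = x ∘ σ :=
  Tuple.unique_antitone (σ := Fin.revPerm.trans (Tuple.sort x)) (dsort_antitone x) hσ

lemma dsort_eq_self (hx : Antitone x) : dsort x = x :=
  dsort_eq_comp_of_antitone (σ := 1) hx

variable (x)

lemma dsort_comp_perm (σ : Equiv.Perm (Fin n)) : dsort (x ∘ σ) = dsort x := by
  obtain ⟨τ, hτ⟩ := exists_perm_dsort_eq x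
  have hcomp : (x ∘ σ) ∘ (τ.trans σ.symm) = dsort x := by
    ext k
    simp [hτ]
  rw [dsort_eq_comp_of_antitone (hcomp ▸ dsort_antitone x), hcomp]

lemma dsort_comp_of_monotone {g : ℝ → ℝ} (hg : Monotone g) : dsort (g ∘ x) = g ∘ dsort x := by
  obtain ⟨σ, hσ⟩ := exists_perm_dsort_eq x
  have hx : Antitone (x ∘ σ) := hσ ▸ dsort_antitone x
  have hanti : Antitone ((g ∘ x) ∘ σ) := hg.comp_antitone hx
  rw [dsort_eq_comp_of_antitone hanti, hσ, Function.comp_assoc]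

lemma dsort_smul {t : ℝ} (ht : 0 ≤ t) : dsort (t • x) = t • dsort x :=
  dsort_comp_of_monotone x (monotone_mul_left_of_nonneg ht)

lemma dsort_add_smul_one (c : ℝ) : dsort (x + c • 1) = dsort x + c • 1 := by
  have h := dsort_comp_of_monotone x (add_left_mono (a := c))
  convert h using 2 <;> ext k <;> simp [add_comm]

lemma dsort_neg : dsort (-x) = -(dsort x ∘ Fin.rev) := by
  obtain ⟨σ, hσ⟩ := exists_perm_dsort_eq x
  have hcomp : (-x) ∘ (Fin.revPerm.trans σ) = -(dsort x ∘ Fin.rev) := by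
    rw [hσ]
    rfl
  have hanti : Antitone (-(dsort x ∘ Fin.rev)) :=
    ((dsort_antitone x).comp Fin.rev_anti).neg
  rw [dsort_eq_comp_of_antitone (hcomp ▸ hanti), hcomp]

/- `x` takes values `≥ x₍ₖ₎` at `k + 1` indices and `y` takes values `≤ y₍ₖ₎` at `n - k` indices,
so both happen at a common index. -/
lemma dsort_mono : Monotone (dsort : (Fin n → ℝ) → Fin n → ℝ) := by
  intro x y hxy k
  obtain ⟨σ, hσ⟩ := exists_perm_dsort_eq x
  obtain ⟨τ, hτ⟩ := exists_perm_dsort_eq y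
  obtain ⟨i, hi⟩ : ((Finset.Iic k).map σ.toEmbedding ∩
      (Finset.Ici k).map τ.toEmbedding).Nonempty := by
    refine Finset.inter_nonempty_of_card_lt_card_add_card (Finset.subset_univ _)
      (Finset.subset_univ _) ?_
    simp only [Finset.card_univ, Fintype.card_fin, Finset.card_map, Fin.card_Iic, Fin.card_Ici]
    omega
  simp only [Finset.mem_inter, Finset.mem_map_equiv, Finset.mem_Iic, Finset.mem_Ici] at hi
  calc dsort x k ≤ dsort x (σ.symm i) := dsort_antitone x hi.1
    _ = x i := by simp [hσ]
    _ ≤ y i := hxy i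
    _ = dsort y (τ.symm i) := by simp [hτ]
    _ ≤ dsort y k := dsort_antitone y hi.2

lemma lipschitzWith_dsort_apply (k : Fin n) : LipschitzWith 1 fun x => dsort x k := by
  refine LipschitzWith.of_le_add fun x y => ?_
  have hle : x ≤ y + dist x y • 1 := fun i => by
    have hi := (Real.sub_le_dist (x i) (y i)).trans (dist_le_pi_dist x y i)
    simp only [Pi.add_apply, Pi.smul_apply, Pi.one_apply, smul_eq_mul, mul_one]
    linarith
  simpa [dsort_add_smul_one] using dsort_mono hle k

lemma continuous_dsort : Continuous (dsort : (Fin n → ℝ) → Fin n → ℝ) :=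
  continuous_pi fun k => (lipschitzWith_dsort_apply k).continuous

end DecreasingRearrangement

lemma exists_pos_add_smul_mem_of_isOpen {E : Type*} [AddCommGroup E] [Module ℝ E]
    [TopologicalSpace E] [ContinuousAdd E] [ContinuousSMul ℝ E] {S : Set E} (hS : IsOpen S)
    {x : E} (hx : x ∈ S) (v : E) : ∃ t : ℝ, 0 < t ∧ x + t • v ∈ S := by
  have hcont : Continuous fun t : ℝ => x + t • v := by fun_prop
  have hnear : ∀ᶠ t in 𝓝[>] (0 : ℝ), x + t • v ∈ S :=
    (hcont.tendsto' 0 x (by simp)).mono_left nhdsWithin_le_nhds |>.eventually (hS.mem_nhds hx)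
  exact (eventually_mem_nhdsWithin.and hnear).exists

section DirichletDual

open scoped Pointwise

/-- The Dirichlet dual of Harvey and Lawson, for open sets: their dual `-(int F)ᶜ` of a closed
set `F` becomes `-(closure S)ᶜ`. -/
def dirichletDual {E : Type*} [TopologicalSpace E] [Neg E] (S : Set E) : Set E :=
  -(closure S)ᶜ

variable {E : Type*} [TopologicalSpace E] [InvolutiveNeg E] {S : Set E} {x : E}

lemma mem_dirichletDual : x ∈ dirichletDual S ↔ -x ∉ closure S := Iff.rfl

lemma dirichletDual_antitone : Antitone (dirichletDual : Set E → Set E) :=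
  fun _ _ h => neg_subset_neg.mpr (compl_subset_compl.mpr (closure_mono h))

variable [ContinuousNeg E]

variable (S) in
lemma isOpen_dirichletDual : IsOpen (dirichletDual S) :=
  isClosed_closure.isOpen_compl.preimage continuous_neg

lemma closure_dirichletDual (hS : interior (closure S) = S) :
    closure (dirichletDual S) = -Sᶜ := by
  rw [dirichletDual, ← neg_closure, closure_compl, hS]

lemma dirichletDual_dirichletDual (hS : interior (closure S) = S) :
    dirichletDual (dirichletDual S) = S := by
  rw [dirichletDual, closure_dirichletDual hS]
  ext x
  simp

lemma frontier_dirichletDual (hS : interior (closure S) = S) :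
    frontier (dirichletDual S) = -frontier S := by
  have hopen : IsOpen S := hS ▸ isOpen_interior
  rw [(isOpen_dirichletDual S).frontier_eq, closure_dirichletDual hS, hopen.frontier_eq]
  ext x
  simp [mem_dirichletDual, and_comm]

end DirichletDual

section ConditionC

variable {n : ℕ} {Γ : Set (Fin n → ℝ)} {x y : Fin n → ℝ}

lemma CondC.isOpen (hΓ : CondC Γ) : IsOpen Γ := hΓ.2.2.1

lemma CondC.comp_perm_mem (hΓ : CondC Γ) (hx : x ∈ Γ) (σ : Equiv.Perm (Fin n)) : x ∘ σ ∈ Γ :=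
  hΓ.2.2.2.1 σ x hx

lemma CondC.smul_mem (hΓ : CondC Γ) (hx : x ∈ Γ) {t : ℝ} (ht : 0 < t) : t • x ∈ Γ :=
  hΓ.2.2.2.2.1 x hx t ht

lemma CondC.mem_of_forall_lt (hΓ : CondC Γ) (hx : x ∈ Γ) (hxy : ∀ i, x i < y i) : y ∈ Γ := by
  simpa using hΓ.2.2.2.2.2 x hx (y - x) fun i => sub_pos.mpr (hxy i)

lemma CondC.dsort_mem (hΓ : CondC Γ) (hx : x ∈ Γ) : dsort x ∈ Γ := by
  obtain ⟨σ, hσ⟩ := exists_perm_dsort_eq x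
  exact hσ ▸ hΓ.comp_perm_mem hx σ

lemma CondC.zero_notMem (hΓ : CondC Γ) : (0 : Fin n → ℝ) ∉ Γ := by
  refine fun h0 => hΓ.2.1 (eq_univ_of_forall fun y => ?_)
  obtain ⟨t, ht, hty⟩ := exists_pos_add_smul_mem_of_isOpen hΓ.isOpen h0 y
  rw [zero_add] at hty
  simpa [ht.ne'] using hΓ.smul_mem hty (inv_pos.mpr ht)

lemma CondC.mem_of_smul_mem (hΓ : CondC Γ) {t : ℝ} (ht : 0 ≤ t) (hx : t • x ∈ Γ) : x ∈ Γ := by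
  rcases ht.eq_or_lt with rfl | ht
  · exact absurd (zero_smul ℝ x ▸ hx) hΓ.zero_notMem
  · simpa [ht.ne'] using hΓ.smul_mem hx (inv_pos.mpr ht)

lemma CondC.isUpperSet (hΓ : CondC Γ) : IsUpperSet Γ := by
  intro x y hxy hx
  obtain ⟨t, ht, htx⟩ := exists_pos_add_smul_mem_of_isOpen hΓ.isOpen hx (-1)
  refine hΓ.mem_of_forall_lt htx fun i => ?_
  simpa using (hxy i).trans_lt (lt_add_of_pos_right _ ht)

lemma CondC.mem_of_mem_closure_of_forall_lt (hΓ : CondC Γ) (hx : x ∈ closure Γ)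
    (hxy : ∀ i, x i < y i) : y ∈ Γ :=
  interior_subset (hΓ.isUpperSet.mem_interior_of_forall_lt hx hxy)

lemma CondC.interior_closure (hΓ : CondC Γ) : interior (closure Γ) = Γ := by
  refine subset_antisymm (fun x hx => ?_) (interior_maximal subset_closure hΓ.isOpen)
  obtain ⟨t, ht, htx⟩ := exists_pos_add_smul_mem_of_isOpen isOpen_interior hx (-1)
  exact hΓ.mem_of_mem_closure_of_forall_lt (interior_subset htx) fun i => by simpa

protected lemma CondC.dirichletDual (hΓ : CondC Γ) : CondC (dirichletDual Γ) := by
  refine ⟨?_, ?_, isOpen_dirichletDual Γ, fun σ x hx hσ => hx ?_, fun x hx t ht h => hx ?_,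
    fun x hx m hm h => hx ?_⟩
  · obtain ⟨z, hz⟩ := (ne_univ_iff_exists_notMem Γ).mp hΓ.2.1
    refine ⟨1 - z, fun h => hz (hΓ.mem_of_mem_closure_of_forall_lt h fun i => ?_)⟩
    simp
  · obtain ⟨z, hz⟩ := hΓ.1
    refine (ne_univ_iff_exists_notMem _).mpr ⟨-z, fun h => h ?_⟩
    simpa using subset_closure hz
  · have hcont : Continuous fun z : Fin n → ℝ => z ∘ σ.symm := by fun_prop
    convert map_mem_closure hcont hσ fun z hz => hΓ.comp_perm_mem hz σ.symm using 1
    ext i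
    simp
  · convert map_mem_closure (continuous_const_smul t⁻¹) h
      fun z hz => hΓ.smul_mem hz (inv_pos.mpr ht) using 1
    simp [ht.ne']
  · exact subset_closure (hΓ.mem_of_mem_closure_of_forall_lt h fun i => by simpa using hm i)

end ConditionC

section OrderedCone

variable {n : ℕ} {w : Fin n → ℝ}

/-- The cone on which the ordered weighted sum `x ↦ ∑ₖ wₖ x₍ₖ₎` is positive. -/
def orderedCone (w : Fin n → ℝ) : Set (Fin n → ℝ) := {x | 0 < w ⬝ᵥ dsort x}

lemma mem_orderedCone {x : Fin n → ℝ} : x ∈ orderedCone w ↔ 0 < w ⬝ᵥ dsort x := Iff.rfl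

lemma continuous_dotProduct_dsort (w : Fin n → ℝ) : Continuous fun x => w ⬝ᵥ dsort x :=
  continuous_const.dotProduct continuous_dsort

lemma dotProduct_one_pos (hw : 0 < w) : 0 < w ⬝ᵥ 1 := by
  rw [dotProduct_one]
  exact Fintype.sum_pos hw

lemma isOpen_orderedCone (w : Fin n → ℝ) : IsOpen (orderedCone w) :=
  isOpen_lt continuous_const (continuous_dotProduct_dsort w)

lemma condC_orderedCone (hw : 0 < w) : CondC (orderedCone w) := by
  refine ⟨⟨1, ?_⟩, (ne_univ_iff_exists_notMem _).mpr ⟨0, ?_⟩, isOpen_orderedCone w,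
    fun σ x hx => ?_, fun x hx t ht => ?_, fun x hx m hm => ?_⟩
  · simpa [mem_orderedCone, dsort_eq_self (x := 1) antitone_const] using dotProduct_one_pos hw
  · simp [mem_orderedCone, dsort_eq_self (x := 0) antitone_const]
  · simpa only [mem_orderedCone, dsort_comp_perm] using hx
  · simpa [mem_orderedCone, dsort_smul x ht.le, ht] using hx
  · exact hx.trans_le (dotProduct_le_dotProduct_of_nonneg_left
      (dsort_mono (le_add_of_nonneg_right fun i => (hm i).le)) hw.le)

lemma closure_orderedCone (hw : 0 < w) : closure (orderedCone w) = {x | 0 ≤ w ⬝ᵥ dsort x} := by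
  refine subset_antisymm (closure_minimal (ofPred_subset_ofPred.mpr fun _ => le_of_lt)
    (isClosed_le continuous_const (continuous_dotProduct_dsort w))) fun x hx => ?_
  by_contra hxc
  obtain ⟨t, ht, htx⟩ := exists_pos_add_smul_mem_of_isOpen isClosed_closure.isOpen_compl hxc 1
  refine htx (subset_closure ?_)
  rw [mem_orderedCone, dsort_add_smul_one, dotProduct_add, dotProduct_smul]
  exact add_pos_of_nonneg_of_pos hx (mul_pos ht (dotProduct_one_pos hw))

lemma frontier_orderedCone (hw : 0 < w) : frontier (orderedCone w) = {x | w ⬝ᵥ dsort x = 0} := by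
  rw [(isOpen_orderedCone w).frontier_eq, closure_orderedCone hw]
  ext x
  simp [mem_orderedCone, le_antisymm_iff, and_comm]

lemma dirichletDual_orderedCone (hw : 0 < w) :
    dirichletDual (orderedCone w) = {x | 0 < w ⬝ᵥ (dsort x ∘ Fin.rev)} := by
  ext x
  simp [mem_dirichletDual, closure_orderedCone hw, dsort_neg]

end OrderedCone

section ExtremalCones

variable {m : ℕ} {μ : ℝ}

/-- The weights `(1, μ, 0, …, 0)` of the ordered weighted sum `λ₍₁₎ + μ λ₍₂₎`. -/
def topTwoWeight (m : ℕ) (μ : ℝ) : Fin (m + 2) → ℝ := Pi.single 0 1 + Pi.single 1 μ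

/-- The vector `(μ, -1, …, -1)` prescribed on the boundary of the cones in (a); its negative is
the one prescribed in (b). -/
def headVector (m : ℕ) (μ : ℝ) : Fin (m + 2) → ℝ := fun i => if i = 0 then μ else -1

lemma topTwoWeight_dotProduct (μ : ℝ) (y : Fin (m + 2) → ℝ) :
    topTwoWeight m μ ⬝ᵥ y = y 0 + μ * y 1 := by
  simp [topTwoWeight, add_dotProduct]

lemma topTwoWeight_pos (hμ : 0 ≤ μ) : 0 < topTwoWeight m μ :=
  add_pos_of_pos_of_nonneg (Pi.single_pos.mpr one_pos) (Pi.single_nonneg.mpr hμ)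

lemma antitone_headVector (hμ : -1 ≤ μ) : Antitone (headVector m μ) := by
  intro i j hij
  unfold headVector
  split_ifs with hj hi
  · rfl
  · exact absurd (Fin.le_zero_iff.mp (hj ▸ hij)) hi
  · exact hμ
  · rfl

lemma headVector_mem_frontier (hμ : 0 ≤ μ) :
    headVector m μ ∈ frontier (orderedCone (topTwoWeight m μ)) := by
  rw [frontier_orderedCone (topTwoWeight_pos hμ), mem_ofPred_eq,
    dsort_eq_self (antitone_headVector (by linarith)), topTwoWeight_dotProduct]
  simp [headVector]

lemma le_smul_headVector_of_antitone {y : Fin (m + 2) → ℝ} (hy : Antitone y)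
    (hle : y 0 + μ * y 1 ≤ 0) : y ≤ (-y 1) • headVector m μ := by
  intro k
  simp only [Pi.smul_apply, smul_eq_mul, headVector]
  split_ifs with hk
  · rw [hk]
    linarith
  · have hk1 : y k ≤ y 1 := hy (Fin.one_le_of_ne_zero hk)
    linarith

theorem CondC.subset_orderedCone_topTwoWeight {Γ : Set (Fin (m + 2) → ℝ)} (hΓ : CondC Γ)
    (hμ : 0 ≤ μ) (hv : headVector m μ ∉ Γ) : Γ ⊆ orderedCone (topTwoWeight m μ) := by
  intro x hx
  by_contra hneg
  rw [mem_orderedCone, topTwoWeight_dotProduct, not_lt] at hneg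
  have h01 : dsort x 1 ≤ dsort x 0 := dsort_antitone x (Fin.zero_le 1)
  have h1 : dsort x 1 ≤ 0 := by
    by_contra! hpos
    linarith [mul_nonneg hμ hpos.le]
  have hle := le_smul_headVector_of_antitone (dsort_antitone x) hneg
  exact hv (hΓ.mem_of_smul_mem (neg_nonneg.mpr h1) (hΓ.isUpperSet hle (hΓ.dsort_mem hx)))

theorem CondC.dirichletDual_orderedCone_topTwoWeight_subset {Γ : Set (Fin (m + 2) → ℝ)}
    (hΓ : CondC Γ) (hμ : 0 ≤ μ) (hv : -headVector m μ ∈ closure Γ) :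
    dirichletDual (orderedCone (topTwoWeight m μ)) ⊆ Γ := by
  have hdual : dirichletDual Γ ⊆ orderedCone (topTwoWeight m μ) :=
    hΓ.dirichletDual.subset_orderedCone_topTwoWeight hμ fun h => h hv
  exact (dirichletDual_antitone hdual).trans
    (dirichletDual_dirichletDual hΓ.interior_closure).subset

end ExtremalCones

/-- **Extremal cones** (Lemma 2.1): for `μ ≥ 0`,
(a) `Γ̂_μ = {λ : λ₍₁₎ + μ λ₍₂₎ > 0}` satisfies condition (C), contains `(μ,-1,…,-1)` in its
boundary, and is the largest such cone;
(b) `Γ̌_μ = {λ : λ₍ₙ₎ + μ λ₍ₙ₋₁₎ > 0}` satisfies condition (C), contains `(-μ,1,…,1)` in its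
boundary, and is the smallest such cone. -/
theorem extremal_cones
    {n : ℕ} (hn : 2 ≤ n) (μ : ℝ) (hμ : 0 ≤ μ)
    (Γhat Γcheck : Set (Fin n → ℝ))
    (hΓhat : Γhat = {lam : Fin n → ℝ |
      0 < dsort lam ⟨0, by omega⟩ + μ * dsort lam ⟨1, by omega⟩})
    (hΓcheck : Γcheck = {lam : Fin n → ℝ |
      0 < dsort lam ⟨n - 1, by omega⟩ + μ * dsort lam ⟨n - 2, by omega⟩})
    (vminus vplus : Fin n → ℝ)
    (hvminus : vminus = fun i => if i.val = 0 then μ else -1)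
    (hvplus : vplus = fun i => if i.val = 0 then -μ else 1) :
    (CondC Γhat ∧ vminus ∈ frontier Γhat ∧
      ∀ Γ : Set (Fin n → ℝ), CondC Γ → vminus ∈ frontier Γ → Γ ⊆ Γhat) ∧
    (CondC Γcheck ∧ vplus ∈ frontier Γcheck ∧
      ∀ Γ : Set (Fin n → ℝ), CondC Γ → vplus ∈ frontier Γ → Γcheck ⊆ Γ) := by
  obtain ⟨m, rfl⟩ := Nat.exists_eq_add_of_le' hn
  have hw := topTwoWeight_pos (m := m) hμ
  have hC := condC_orderedCone hw
  have hfrontier := headVector_mem_frontier (m := m) hμ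
  have hhat : Γhat = orderedCone (topTwoWeight m μ) := by
    simp only [hΓhat, orderedCone, topTwoWeight_dotProduct]
    rfl
  have hcheck : Γcheck = dirichletDual (orderedCone (topTwoWeight m μ)) := by
    simp only [hΓcheck, dirichletDual_orderedCone hw, topTwoWeight_dotProduct]
    rfl
  have hminus : vminus = headVector m μ := by
    ext i
    simp only [hvminus, headVector, Fin.ext_iff, Fin.val_zero]
  have hplus : vplus = -headVector m μ := by
    ext i
    simp only [hvplus, Pi.neg_apply, headVector, Fin.ext_iff, Fin.val_zero, neg_ite, neg_neg]
  rw [hhat, hcheck, hminus, hplus]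
  refine ⟨⟨hC, hfrontier, fun Γ hΓ hv => ?_⟩, hC.dirichletDual, ?_, fun Γ hΓ hv => ?_⟩
  · exact hΓ.subset_orderedCone_topTwoWeight hμ (hΓ.isOpen.frontier_eq ▸ hv).2
  · rw [frontier_dirichletDual hC.interior_closure]
    simpa using hfrontier
  · exact hΓ.dirichletDual_orderedCone_topTwoWeight_subset hμ (frontier_subset_closure hv)
end
end

section
/- Let n ≥ 2 and let Γ ⊂ ℝⁿ satisfy condition (C). Let 0 ≤ a < b ≤ ∞ and let v ∈ C²((a,b)) be such that the radial function x ↦ v(|x|) satisfies λ(A[v]) ∈ ∂Γ pointwise on the annulus {x ∈ ℝⁿ : a < |x| < b}. Then v coincides on (a,b) with the restriction of one of the following: (a) v(r) = C₁ + C₂·log r on (0,∞) with C₁ ∈ ℝ, C₂ ∈ (−2,0), and this case can occur only when μ_Γ⁺ = 1; (b) v(r) = (2/(μ_Γ⁺−1))·log(C₃·r^{1−μ_Γ⁺} + C₄) on (0,∞) with C₃, C₄ > 0, only when μ_Γ⁺ ∈ [0,1)∪(1,∞); (c) v(r) = C₅ + C₆·log r on (0,∞) with C₅ ∈ ℝ,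 C₆ ∈ (−∞,−2)∪(0,∞), only when μ_Γ⁻ = 1; (d) v(r) = (2/(μ_Γ⁻−1))·log(C₇·r^{1−μ_Γ⁻} + C₈) on {r : C₇·r^{1−μ_Γ⁻} + C₈ > 0} with C₇·C₈ < 0, only when μ_Γ⁻ ∈ [0,1)∪(1,∞); (e) v(r) = C or v(r) = C − 2·log r on (0,∞) with C ∈ ℝ. -/
open Filter Topology MeasureTheory Metric Set
open scoped BigOperators ENNReal NNReal

noncomputable section

/-- `μ_Γ⁻ = inf {c : (c,-1,…,-1) ∈ closure Γ} ∈ [0,∞]` (with `inf ∅ = +∞`). -/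
def muMinus {n : ℕ} (Γ : Set (Fin n → ℝ)) : EReal :=
  sInf {c : EReal | ∃ r : ℝ, c = (r : EReal) ∧
    (fun i : Fin n => if i.val = 0 then r else -1) ∈ closure Γ}

/-- `μ_Γ⁺ = sup {c : (-c,1,…,1) ∈ closure Γ} ∈ [0,∞]`. -/
def muPlus {n : ℕ} (Γ : Set (Fin n → ℝ)) : EReal :=
  sSup {c : EReal | ∃ r : ℝ, c = (r : EReal) ∧
    (fun i : Fin n => if i.val = 0 then -r else 1) ∈ closure Γ}

/-! On the first coordinate axis the Möbius Hessian of a radial function `v` is diagonal; in terms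
of the logarithmic slope `w = r v'` its eigenvalues are, up to a common positive factor,
`w(w+2)/2 - r w'` (once) and `-w(w+2)/2` (`n - 1` times). Among the tuples `(p, q, …, q)`, `∂Γ`
contains at most one ray with `q > 0`, determined by `μ⁺`, and at most one with `q < 0`, determined
by `μ⁻`. Hence `r w' = (1 - μ) w(w+2)/2`, with `μ = μ⁺` where `w(w+2) < 0` and `μ = μ⁻` where
`w(w+2) > 0`. The sign of `w(w+2)` cannot change, because `w(w+2) e^{-kv} r^{-k}` with `k = 1 - μ`
is conserved as long as it is nonzero. If `w(w+2)` vanishes identically, then `w` is constantly `0`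
or `-2`. Otherwise `w e^{-kv/2} r^{-k}` and `(w+2) e^{-kv/2}` are conserved too, and eliminating `w`
gives `e^{-kv/2}` as an affine function of `r^k`; for `k = 0` the slope `w` is constant. -/

section GeneralLemmas

open scoped Pointwise

lemma exists_perm_eq_comp_of_multiset_map_eq {ι α : Type*} [Fintype ι] {f g : ι → α}
    (h : Multiset.map f Finset.univ.val = Multiset.map g Finset.univ.val) :
    ∃ σ : Equiv.Perm ι, f = g ∘ σ := by
  classical
  have card_fiber_eq (c : α) : Fintype.card {i // f i = c} = Fintype.card {i // g i = c} := by
    simpa [Fintype.card_subtype, Multiset.count_map, eq_comm, Finset.card_def] using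
      congrArg (Multiset.count c) h
  let e (c : α) := Fintype.equivOfCardEq (card_fiber_eq c)
  exact ⟨Equiv.ofFiberEquiv e, funext fun i => (Equiv.ofFiberEquiv_map e i).symm⟩

lemma closure_add_subset_interior {G : Type*} [TopologicalSpace G] [AddGroup G]
    [IsTopologicalAddGroup G] {s t : Set G} (ht : IsOpen t) (hst : s + t ⊆ s) :
    closure s + t ⊆ interior s := by
  rw [ht.closure_add]
  exact interior_maximal hst ht.add_left

lemma mapsTo_frontier_of_homeomorph {X : Type*} [TopologicalSpace X] {s : Set X} (e : X ≃ₜ X)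
    (he : MapsTo e s s) (he' : MapsTo e.symm s s) : MapsTo e (frontier s) (frontier s) := by
  have preimage_eq : e ⁻¹' s = s :=
    Subset.antisymm (fun x hx => by simpa using he' hx) he
  exact fun x hx => by rwa [← mem_preimage, e.preimage_frontier, preimage_eq]

lemma eq_of_deriv_eq_zero_of_mem {E : Type*} [NormedAddCommGroup E] [NormedSpace ℝ E]
    {I : Set ℝ} (hIo : IsOpen I) (hIc : IsPreconnected I) {U : Set E} (hU : IsOpen U)
    {f : ℝ → E} (hf : DifferentiableOn ℝ f I) (hf' : ∀ x ∈ I, f x ∈ U → deriv f x = 0)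
    {x₀ : ℝ} (hx₀ : x₀ ∈ I) (hfx₀ : f x₀ ∈ U) {x : ℝ} (hx : x ∈ I) : f x = f x₀ := by
  have isOpen_inter : IsOpen (I ∩ f ⁻¹' U) := hf.continuousOn.isOpen_inter_preimage hIo hU
  have isOpen_level : IsOpen (I ∩ f ⁻¹' U ∩ f ⁻¹' {f x₀}) :=
    isOpen_inter.isOpen_inter_preimage_of_deriv_eq_zero (hf.mono inter_subset_left)
      (fun y hy => hf' y hy.1 hy.2) _
  have subset_level : I ⊆ I ∩ f ⁻¹' U ∩ f ⁻¹' {f x₀} := by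
    refine hIc.subset_of_closure_inter_subset isOpen_level ⟨x₀, hx₀, ⟨hx₀, hfx₀⟩, rfl⟩ ?_
    rintro y ⟨hy, hyI⟩
    have hfy : f y ∈ closure {f x₀} :=
      ((hf.continuousOn.continuousAt (hIo.mem_nhds hyI)).continuousWithinAt.mem_closure hy
        fun z hz => hz.2)
    rw [closure_singleton, mem_singleton_iff] at hfy
    exact ⟨⟨hyI, by rwa [mem_preimage, hfy]⟩, hfy⟩
  exact (subset_level hx).2

lemma hasFDerivAt_norm_of_ne_zero {E : Type*} [NormedAddCommGroup E] [InnerProductSpace ℝ E]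
    {x : E} (hx : x ≠ 0) : HasFDerivAt (fun y : E => ‖y‖) (‖x‖⁻¹ • innerSL ℝ x) x := by
  have sqrt_deriv := ((hasFDerivAt_id x).norm_sq).sqrt (by simpa using hx)
  simp only [id, Real.sqrt_sq (norm_nonneg _)] at sqrt_deriv
  refine sqrt_deriv.congr_fderiv ?_
  ext y
  simp [mul_assoc]

lemma ereal_toReal_eq_one_iff {x : EReal} : x.toReal = 1 ↔ x = 1 := by
  induction x with
  | bot => simpa using EReal.bot_ne_coe 1
  | coe r => simp
  | top => simpa using EReal.top_ne_coe 1

lemma isOpen_setOf_lt_and_coe_lt (a : ℝ) (b : EReal) : IsOpen {r : ℝ | a < r ∧ (r : EReal) < b} :=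
  isOpen_Ioi.inter (isOpen_Iio.preimage continuous_coe_real_ereal)

lemma isPreconnected_setOf_lt_and_coe_lt (a : ℝ) (b : EReal) :
    IsPreconnected {r : ℝ | a < r ∧ (r : EReal) < b} :=
  (ordConnected_Ioi.inter
    (ordConnected_Iio.preimage_mono EReal.coe_strictMono.monotone)).isPreconnected

end GeneralLemmas

section Cone

open scoped Pointwise

variable {n : ℕ} {Γ : Set (Fin n → ℝ)} {p q r t : ℝ}

/-- The tuple `(p, q, …, q)` occurring in the definitions of `lamStar`, `muMinus` and `muPlus`,
its first coordinate being the one of index `0`. -/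
def headTail (n : ℕ) (p q : ℝ) : Fin n → ℝ := fun i => if i.val = 0 then p else q

lemma headTail_add_headTail (p q p' q' : ℝ) :
    headTail n p q + headTail n p' q' = headTail n (p + p') (q + q') := by
  ext i
  simp only [headTail, Pi.add_apply]
  split_ifs <;> rfl

lemma smul_headTail (t p q : ℝ) : t • headTail n p q = headTail n (t * p) (t * q) := by
  ext i
  simp [headTail, mul_ite]

lemma headTail_mem_GammaN (hp : 0 < p) (hq : 0 < q) : headTail n p q ∈ GammaN n := fun i => by
  unfold headTail
  split_ifs <;> assumption

lemma isOpen_GammaN (n : ℕ) : IsOpen (GammaN n) := by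
  have : GammaN n = univ.pi fun _ => Ioi 0 := by ext; simp [GammaN]
  rw [this]
  exact isOpen_set_pi finite_univ fun _ _ => isOpen_Ioi

lemma smul_mem_closure (hcone : ∀ lam ∈ Γ, ∀ t : ℝ, 0 < t → t • lam ∈ Γ) (ht : 0 < t)
    {lam : Fin n → ℝ} (hlam : lam ∈ closure Γ) : t • lam ∈ closure Γ :=
  MapsTo.closure (fun lam hlam => hcone lam hlam t ht) (continuous_const_smul t) hlam

lemma smul_mem_frontier (hcone : ∀ lam ∈ Γ, ∀ t : ℝ, 0 < t → t • lam ∈ Γ) (ht : 0 < t)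
    {lam : Fin n → ℝ} (hlam : lam ∈ frontier Γ) : t • lam ∈ frontier Γ :=
  mapsTo_frontier_of_homeomorph (Homeomorph.smulOfNeZero t ht.ne')
    (fun lam hlam => hcone lam hlam t ht) (fun lam hlam => hcone lam hlam t⁻¹ (inv_pos.2 ht)) hlam

lemma comp_perm_mem_frontier (hsymm : ∀ σ : Equiv.Perm (Fin n), ∀ lam ∈ Γ, lam ∘ σ ∈ Γ)
    (σ : Equiv.Perm (Fin n)) {lam : Fin n → ℝ} (hlam : lam ∈ frontier Γ) :
    lam ∘ σ ∈ frontier Γ :=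
  mapsTo_frontier_of_homeomorph
    { toEquiv := σ.symm.arrowCongr (Equiv.refl ℝ)
      continuous_toFun := Pi.continuous_precomp σ
      continuous_invFun := Pi.continuous_precomp σ.symm }
    (hsymm σ) (hsymm σ.symm) hlam

lemma headTail_mem_interior_of_lt (hcone : ∀ lam ∈ Γ, ∀ t : ℝ, 0 < t → t • lam ∈ Γ)
    (hadd : ∀ lam ∈ Γ, ∀ mu ∈ GammaN n, lam + mu ∈ Γ) (hq : q ≠ 0) (hrp : r < p)
    (hr : headTail n r q ∈ closure Γ) : headTail n p q ∈ interior Γ := by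
  -- Rescaling `(r, q, …, q)` by `1 - δ q` lowers every `q` by `δ q²` and moves `r` only slightly.
  obtain ⟨δ, ⟨scale_pos, head_pos⟩, hδ⟩ :
      ∃ δ : ℝ, (0 < 1 - δ * q ∧ 0 < p - (1 - δ * q) * r) ∧ 0 < δ := by
    have scale_tendsto : Tendsto (fun δ : ℝ => 1 - δ * q) (𝓝 0) (𝓝 1) :=
      Continuous.tendsto' (by fun_prop) _ _ (by simp)
    have head_tendsto : Tendsto (fun δ : ℝ => p - (1 - δ * q) * r) (𝓝 0) (𝓝 (p - r)) :=
      Continuous.tendsto' (by fun_prop) _ _ (by simp)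
    exact ((((scale_tendsto.eventually_const_lt one_pos).and
      (head_tendsto.eventually_const_lt (sub_pos.2 hrp))).filter_mono nhdsWithin_le_nhds).and
        (self_mem_nhdsWithin (s := Ioi 0))).exists
  have gap_mem : headTail n (p - (1 - δ * q) * r) (δ * q ^ 2) ∈ GammaN n :=
    headTail_mem_GammaN head_pos (by positivity)
  have := closure_add_subset_interior (isOpen_GammaN n) (add_subset_iff.2 hadd)
    (add_mem_add (smul_mem_closure hcone scale_pos hr) gap_mem)
  rw [smul_headTail, headTail_add_headTail] at this
  convert this using 2 <;> ring

lemma muPlus_eq_of_headTail_mem_frontier (hcone : ∀ lam ∈ Γ, ∀ t : ℝ, 0 < t → t • lam ∈ Γ)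
    (hadd : ∀ lam ∈ Γ, ∀ mu ∈ GammaN n, lam + mu ∈ Γ) (hq : 0 < q)
    (h : headTail n p q ∈ frontier Γ) : muPlus Γ = ((-(p / q) : ℝ) : EReal) := by
  have normalized : headTail n (-(-(p / q))) 1 ∈ frontier Γ := by
    simpa [smul_headTail, hq.ne', div_eq_inv_mul] using smul_mem_frontier hcone (inv_pos.2 hq) h
  refine IsGreatest.csSup_eq ⟨⟨_, rfl, frontier_subset_closure normalized⟩, ?_⟩
  rintro _ ⟨r, rfl, hr⟩
  by_contra! hlt
  exact normalized.2 (headTail_mem_interior_of_lt hcone hadd one_ne_zero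
    (neg_lt_neg (EReal.coe_lt_coe_iff.1 hlt)) hr)

lemma muMinus_eq_of_headTail_mem_frontier (hcone : ∀ lam ∈ Γ, ∀ t : ℝ, 0 < t → t • lam ∈ Γ)
    (hadd : ∀ lam ∈ Γ, ∀ mu ∈ GammaN n, lam + mu ∈ Γ) (hq : q < 0)
    (h : headTail n p q ∈ frontier Γ) : muMinus Γ = ((-(p / q) : ℝ) : EReal) := by
  have normalized : headTail n (-(p / q)) (-1) ∈ frontier Γ := by
    simpa only [smul_headTail, neg_mul, inv_neg, inv_mul_cancel₀ hq.ne, div_eq_inv_mul] using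
      smul_mem_frontier hcone (inv_pos.2 (neg_pos.2 hq)) h
  refine IsLeast.csInf_eq ⟨⟨_, rfl, frontier_subset_closure normalized⟩, ?_⟩
  rintro _ ⟨r, rfl, hr⟩
  by_contra! hlt
  exact normalized.2 (headTail_mem_interior_of_lt hcone hadd (neg_ne_zero.2 one_ne_zero)
    (EReal.coe_lt_coe_iff.1 hlt) hr)

lemma muPlus_ne_top_and_eq_mul (hcone : ∀ lam ∈ Γ, ∀ t : ℝ, 0 < t → t • lam ∈ Γ)
    (hadd : ∀ lam ∈ Γ, ∀ mu ∈ GammaN n, lam + mu ∈ Γ) (hq : q < 0)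
    (h : headTail n (q - p) (-q) ∈ frontier Γ) :
    muPlus Γ ≠ ⊤ ∧ p = (1 - (muPlus Γ).toReal) * q := by
  rw [muPlus_eq_of_headTail_mem_frontier hcone hadd (neg_pos.2 hq) h, EReal.toReal_coe]
  refine ⟨EReal.coe_ne_top _, ?_⟩
  have := hq.ne
  field_simp
  ring

lemma muMinus_ne_top_and_eq_mul (hcone : ∀ lam ∈ Γ, ∀ t : ℝ, 0 < t → t • lam ∈ Γ)
    (hadd : ∀ lam ∈ Γ, ∀ mu ∈ GammaN n, lam + mu ∈ Γ) (hq : 0 < q)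
    (h : headTail n (q - p) (-q) ∈ frontier Γ) :
    muMinus Γ ≠ ⊤ ∧ p = (1 - (muMinus Γ).toReal) * q := by
  rw [muMinus_eq_of_headTail_mem_frontier hcone hadd (neg_neg_iff_pos.2 hq) h, EReal.toReal_coe]
  refine ⟨EReal.coe_ne_top _, ?_⟩
  field_simp
  ring

lemma mem_of_eigIn_diagonal {S : Set (Fin n → ℝ)}
    (hS : ∀ σ : Equiv.Perm (Fin n), ∀ lam ∈ S, lam ∘ σ ∈ S) {d : Fin n → ℝ}
    (h : EigIn (Matrix.diagonal d) S) : d ∈ S := by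
  obtain ⟨hermitian, eigenvalues_mem⟩ := h
  have roots_eq : (Matrix.diagonal d).charpoly.roots = Multiset.map d Finset.univ.val := by
    rw [Matrix.charpoly_diagonal, Polynomial.roots_prod _ _
      (Finset.prod_ne_zero_iff.2 fun i _ => Polynomial.X_sub_C_ne_zero _)]
    simp
  obtain ⟨σ, hσ⟩ : ∃ σ : Equiv.Perm (Fin n), d = hermitian.eigenvalues ∘ σ :=
    exists_perm_eq_comp_of_multiset_map_eq <| by
      simpa [roots_eq] using hermitian.roots_charpoly_eq_eigenvalues
  exact hσ ▸ hS σ _ eigenvalues_mem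

end Cone

section RadialMobius

variable {n : ℕ} {v : ℝ → ℝ} {x : Euc n}

lemma innerSL_single_one (x : Euc n) (i : Fin n) :
    innerSL ℝ x (EuclideanSpace.single i 1) = x i := by
  simp [innerSL_apply_apply, EuclideanSpace.inner_single_right]

lemma pgrad_comp_norm (hx : x ≠ 0) (hv : DifferentiableAt ℝ v ‖x‖) (i : Fin n) :
    pgrad (fun y => v ‖y‖) x i = deriv v ‖x‖ / ‖x‖ * x i := by
  have comp_deriv : HasFDerivAt (fun y : Euc n => v ‖y‖) _ x :=
    hv.hasDerivAt.comp_hasFDerivAt x (hasFDerivAt_norm_of_ne_zero hx)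
  rw [pgrad, comp_deriv.fderiv]
  simp only [smul_apply, innerSL_single_one, smul_eq_mul]
  ring

lemma phess_comp_norm (hx : x ≠ 0) (hv : ∀ᶠ r in 𝓝 ‖x‖, DifferentiableAt ℝ v r)
    (hv' : DifferentiableAt ℝ (deriv v) ‖x‖) (i j : Fin n) :
    phess (fun y => v ‖y‖) x i j = deriv v ‖x‖ / ‖x‖ * (if i = j then 1 else 0) +
      (deriv (deriv v) ‖x‖ - deriv v ‖x‖ / ‖x‖) / ‖x‖ ^ 2 * (x i * x j) := by
  have norm_ne_zero : ‖x‖ ≠ 0 := norm_ne_zero_iff.2 hx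
  have pgrad_eventuallyEq : (fun y => pgrad (fun y => v ‖y‖) y j) =ᶠ[𝓝 x]
      fun y => deriv v ‖y‖ / ‖y‖ * y j := by
    filter_upwards [continuous_norm.continuousAt.eventually hv, isOpen_ne.mem_nhds hx]
      with y hvy hy using pgrad_comp_norm hy hvy j
  have slope_deriv : HasDerivAt (fun r => deriv v r / r)
      ((deriv (deriv v) ‖x‖ * ‖x‖ - deriv v ‖x‖ * 1) / ‖x‖ ^ 2) ‖x‖ :=
    hv'.hasDerivAt.div (hasDerivAt_id _) norm_ne_zero
  have coord_deriv : HasFDerivAt (fun y : Euc n => y j) (EuclideanSpace.proj j : Euc n →L[ℝ] ℝ) x :=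
    (EuclideanSpace.proj j : Euc n →L[ℝ] ℝ).hasFDerivAt
  have pgrad_deriv := ((slope_deriv.comp_hasFDerivAt x (hasFDerivAt_norm_of_ne_zero hx)).mul
    coord_deriv).congr_of_eventuallyEq pgrad_eventuallyEq
  change fderiv ℝ (fun y => pgrad (fun y => v ‖y‖) y j) x _ = _
  rw [pgrad_deriv.fderiv]
  simp only [Function.comp_apply, add_apply, smul_apply, innerSL_single_one, PiLp.proj_apply,
    PiLp.single_apply, smul_eq_mul, eq_comm (a := j)]
  field_simp

lemma mobius_comp_norm_single [NeZero n] {r : ℝ} (hr : 0 < r)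
    (hv : ∀ᶠ s in 𝓝 r, DifferentiableAt ℝ v s) (hv' : DifferentiableAt ℝ (deriv v) r) :
    mobius (fun y : Euc n => v ‖y‖) (EuclideanSpace.single 0 r) =
      Matrix.diagonal (Real.exp (-2 * v r) • headTail n
        (-deriv (deriv v) r + deriv v r ^ 2 / 2) (-(deriv v r / r) - deriv v r ^ 2 / 2)) := by
  set x : Euc n := EuclideanSpace.single 0 r with x_def
  have norm_x : ‖x‖ = r := by simp [x_def, abs_of_pos hr]
  have x_ne_zero : x ≠ 0 := norm_pos_iff.1 (norm_x ▸ hr)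
  have x_apply (i : Fin n) : x i = if i = 0 then r else 0 := by simp [x_def]
  have pgrad_x (i : Fin n) : pgrad (fun y => v ‖y‖) x i = if i = 0 then deriv v r else 0 := by
    rw [pgrad_comp_norm x_ne_zero (norm_x.symm ▸ hv.self_of_nhds), norm_x, x_apply, mul_ite,
      mul_zero, div_mul_cancel₀ _ hr.ne']
  have phess_x (i j : Fin n) : phess (fun y => v ‖y‖) x i j =
      if i = j then (if i = 0 then deriv (deriv v) r else deriv v r / r) else 0 := by
    rw [phess_comp_norm x_ne_zero (norm_x.symm ▸ hv) (norm_x.symm ▸ hv'), norm_x, x_apply, x_apply]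
    rcases eq_or_ne i j with rfl | hij
    · simp only [if_true]
      split_ifs
      · field_simp
        ring
      · ring
    · have product_eq_zero : (if i = 0 then r else 0) * (if j = 0 then r else 0) = 0 := by
        split_ifs with hi hj <;> first | exact absurd (hi.trans hj.symm) hij | simp
      simp [product_eq_zero, hij]
  ext i j
  simp only [mobius, Matrix.smul_apply, Matrix.of_apply, Matrix.diagonal_apply, Pi.smul_apply,
    headTail, Fin.val_eq_zero_iff, pgrad_x, phess_x, norm_x, smul_eq_mul]
  split_ifs <;> simp_all <;> ring

end RadialMobius

section SlopeEquation

variable {n : ℕ} {Γ : Set (Fin n → ℝ)} {v : ℝ → ℝ} {r : ℝ}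

/-- The derivative `r v'(r)` of `v` with respect to `log r`, in terms of which the eigenvalue
condition becomes autonomous. -/
def logSlope (v : ℝ → ℝ) (r : ℝ) : ℝ := r * deriv v r

lemma hasDerivAt_logSlope_div (hr : r ≠ 0) (hv : DifferentiableAt ℝ v r) :
    HasDerivAt v (logSlope v r / r) r := by
  rw [logSlope, mul_div_cancel_left₀ _ hr]
  exact hv.hasDerivAt

lemma hasDerivAt_logSlope (hv' : DifferentiableAt ℝ (deriv v) r) :
    HasDerivAt (logSlope v) (deriv v r + r * deriv (deriv v) r) r :=
  ((hasDerivAt_id r).mul hv'.hasDerivAt).congr_deriv (by simp)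

lemma headTail_logSlope_mem_frontier [NeZero n]
    (hsymm : ∀ σ : Equiv.Perm (Fin n), ∀ lam ∈ Γ, lam ∘ σ ∈ Γ)
    (hcone : ∀ lam ∈ Γ, ∀ t : ℝ, 0 < t → t • lam ∈ Γ) (hr : 0 < r)
    (hv : ∀ᶠ s in 𝓝 r, DifferentiableAt ℝ v s) (hv' : DifferentiableAt ℝ (deriv v) r)
    (hsol : ∀ x : Euc n, ‖x‖ = r → EigIn (mobius (fun y => v ‖y‖) x) (frontier Γ)) :
    headTail n (logSlope v r * (logSlope v r + 2) / 2 - r * deriv (logSlope v) r)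
      (-(logSlope v r * (logSlope v r + 2) / 2)) ∈ frontier Γ := by
  have eigenvalues_mem : Real.exp (-2 * v r) • headTail n (-deriv (deriv v) r + deriv v r ^ 2 / 2)
      (-(deriv v r / r) - deriv v r ^ 2 / 2) ∈ frontier Γ := by
    have eigIn := hsol (EuclideanSpace.single 0 r) (by simp [abs_of_pos hr])
    rw [mobius_comp_norm_single hr hv hv'] at eigIn
    exact mem_of_eigIn_diagonal (fun σ _ => comp_perm_mem_frontier hsymm σ) eigIn
  have scale_pos : 0 < r ^ 2 * (Real.exp (-2 * v r))⁻¹ := by positivity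
  have := smul_mem_frontier hcone scale_pos eigenvalues_mem
  rw [smul_smul, inv_mul_cancel_right₀ (Real.exp_pos _).ne', smul_headTail] at this
  rw [(hasDerivAt_logSlope hv').deriv]
  convert this using 2 <;> (unfold logSlope; field_simp; ring)

end SlopeEquation

section SlopeODE

variable {I : Set ℝ} {v w : ℝ → ℝ} {r r₀ k m : ℝ}

lemma hasDerivAt_exp_mul_rpow {d : ℝ} (hr : 0 < r) (hv : HasDerivAt v (d / r) r) (a b : ℝ) :
    HasDerivAt (fun s => Real.exp (a * v s) * s ^ b)
      ((a * d + b) / r * (Real.exp (a * v r) * r ^ b)) r := by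
  refine ((hv.const_mul a).exp.mul (Real.hasDerivAt_rpow_const (Or.inl hr.ne'))).congr_deriv ?_
  rw [Real.rpow_sub_one hr.ne']
  field_simp

-- `exp (a * v) * r ^ b` is an integrating factor for `r f' = -(a w + b) f`, where `w = r v'`.
lemma mul_exp_mul_rpow_eq (hIo : IsOpen I) (hIc : IsPreconnected I) (hpos : I ⊆ Ioi 0)
    (hv : ∀ r ∈ I, HasDerivAt v (w r / r) r) {U : Set ℝ} (hU : IsOpen U) {f : ℝ → ℝ}
    (hf : DifferentiableOn ℝ f I) {a b : ℝ}
    (hf' : ∀ r ∈ I, f r * (Real.exp (a * v r) * r ^ b) ∈ U →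
      r * deriv f r = -(a * w r + b) * f r)
    (hr₀ : r₀ ∈ I) (hfr₀ : f r₀ * (Real.exp (a * v r₀) * r₀ ^ b) ∈ U) (hr : r ∈ I) :
    f r * (Real.exp (a * v r) * r ^ b) = f r₀ * (Real.exp (a * v r₀) * r₀ ^ b) := by
  have product_deriv (s : ℝ) (hs : s ∈ I) :=
    (hf.differentiableAt (hIo.mem_nhds hs)).hasDerivAt.mul
      (hasDerivAt_exp_mul_rpow (hpos hs) (hv s hs) a b)
  refine eq_of_deriv_eq_zero_of_mem hIo hIc hU
    (fun s hs => (product_deriv s hs).differentiableAt.differentiableWithinAt)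
    (fun s hs hsU => (product_deriv s hs).deriv.trans ?_) hr₀ hfr₀ hr
  have hs0 : s ≠ 0 := (hpos hs).ne'
  have deriv_eq : deriv f s = -(a * w s + b) * f s / s := by
    rw [← hf' s hs hsU, mul_div_cancel_left₀ _ hs0]
  rw [deriv_eq]
  field_simp
  ring

lemma slope_mul_add_two_mem (hIo : IsOpen I) (hIc : IsPreconnected I) (hpos : I ⊆ Ioi 0)
    (hv : ∀ r ∈ I, HasDerivAt v (w r / r) r) (hw : DifferentiableOn ℝ w I)
    {U : Set ℝ} (hU : IsOpen U) (hUcone : ∀ y ∈ U, ∀ t : ℝ, 0 < t → y * t ∈ U)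
    (hode : ∀ r ∈ I, w r * (w r + 2) ∈ U → r * deriv w r = k * (w r * (w r + 2) / 2))
    (hr₀ : r₀ ∈ I) (hwr₀ : w r₀ * (w r₀ + 2) ∈ U) (hr : r ∈ I) : w r * (w r + 2) ∈ U := by
  have factor_pos (s : ℝ) (hs : s ∈ I) : 0 < Real.exp (-k * v s) * s ^ (-k) :=
    mul_pos (Real.exp_pos _) (Real.rpow_pos_of_pos (hpos hs) _)
  have mem_of_mul_mem (s : ℝ) (hs : s ∈ I)
      (h : w s * (w s + 2) * (Real.exp (-k * v s) * s ^ (-k)) ∈ U) : w s * (w s + 2) ∈ U := by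
    simpa only [mul_inv_cancel_right₀ (factor_pos s hs).ne'] using
      hUcone _ h _ (inv_pos.2 (factor_pos s hs))
  have mul_mem := hUcone _ hwr₀ _ (factor_pos r₀ hr₀)
  have conserved := mul_exp_mul_rpow_eq hIo hIc hpos hv hU (a := -k) (b := -k)
    (hw.fun_mul (hw.add_const 2)) (fun s hs hsU => ?_) hr₀ mul_mem hr
  · exact mem_of_mul_mem r hr (conserved ▸ mul_mem)
  · have w_deriv := (hw.differentiableAt (hIo.mem_nhds hs)).hasDerivAt
    rw [(w_deriv.fun_mul (w_deriv.add_const 2)).deriv]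
    linear_combination (2 * w s + 2) * hode s hs (mem_of_mul_mem s hs hsU)

lemma exists_exp_eq_rpow_add_const (hIo : IsOpen I) (hIc : IsPreconnected I) (hpos : I ⊆ Ioi 0)
    (hv : ∀ r ∈ I, HasDerivAt v (w r / r) r) (hw : DifferentiableOn ℝ w I)
    (hode : ∀ r ∈ I, r * deriv w r = k * (w r * (w r + 2) / 2)) (hr₀ : r₀ ∈ I) :
    ∃ α β : ℝ, 0 < α ∧ 0 < β ∧ ∀ r ∈ I,
      Real.exp (-(k / 2) * v r) = -α * w r₀ * r ^ k + β * (w r₀ + 2) := by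
  have r₀_pos : 0 < r₀ := hpos hr₀
  refine ⟨Real.exp (-(k / 2) * v r₀) * r₀ ^ (-k) / 2, Real.exp (-(k / 2) * v r₀) / 2,
    by positivity, by positivity, fun r hr => ?_⟩
  have conserved_w := mul_exp_mul_rpow_eq hIo hIc hpos hv isOpen_univ (a := -(k / 2)) (b := -k) hw
    (fun s hs _ => by rw [hode s hs]; ring) hr₀ (mem_univ _) hr
  have conserved_w_add_two := mul_exp_mul_rpow_eq hIo hIc hpos hv isOpen_univ (a := -(k / 2))
    (b := 0) (hw.add_const 2) (fun s hs _ => by rw [deriv_add_const, hode s hs]; ring)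
    hr₀ (mem_univ _) hr
  have rpow_cancel : r ^ (-k) * r ^ k = 1 := by
    rw [← Real.rpow_add (hpos hr), neg_add_cancel, Real.rpow_zero]
  simp only [Real.rpow_zero, mul_one] at conserved_w_add_two
  linear_combination conserved_w_add_two / 2 - conserved_w * r ^ k / 2 +
    w r * Real.exp (-(k / 2) * v r) / 2 * rpow_cancel

lemma eq_two_div_mul_log (hIo : IsOpen I) (hIc : IsPreconnected I) (hpos : I ⊆ Ioi 0)
    (hv : ∀ r ∈ I, HasDerivAt v (w r / r) r) (hw : DifferentiableOn ℝ w I) (hm : m ≠ 1)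
    (hode : ∀ r ∈ I, r * deriv w r = (1 - m) * (w r * (w r + 2) / 2)) (hr₀ : r₀ ∈ I) :
    ∃ α β : ℝ, 0 < α ∧ 0 < β ∧ ∀ r ∈ I, 0 < -α * w r₀ * r ^ (1 - m) + β * (w r₀ + 2) ∧
      v r = 2 / (m - 1) * Real.log (-α * w r₀ * r ^ (1 - m) + β * (w r₀ + 2)) := by
  obtain ⟨α, β, hα, hβ, h⟩ := exists_exp_eq_rpow_add_const hIo hIc hpos hv hw hode hr₀
  refine ⟨α, β, hα, hβ, fun r hr => ?_⟩
  rw [← h r hr, Real.log_exp]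
  refine ⟨Real.exp_pos _, ?_⟩
  have := sub_ne_zero.2 hm
  field_simp
  ring

lemma exists_eq_const_add_mul_log (hIo : IsOpen I) (hIc : IsPreconnected I) (hpos : I ⊆ Ioi 0)
    {c : ℝ} (hv : ∀ r ∈ I, HasDerivAt v (c / r) r) : ∃ C, ∀ r ∈ I, v r = C + c * Real.log r := by
  have diff_deriv (r : ℝ) (hr : r ∈ I) : HasDerivAt (fun s => v s - c * Real.log s) 0 r :=
    ((hv r hr).sub ((Real.hasDerivAt_log (hpos hr).ne').const_mul c)).congr_deriv
      (by rw [div_eq_mul_inv, sub_self])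
  obtain ⟨C, hC⟩ := hIo.exists_is_const_of_deriv_eq_zero hIc
    (fun r hr => (diff_deriv r hr).differentiableAt.differentiableWithinAt)
    (fun r hr => (diff_deriv r hr).deriv)
  exact ⟨C, fun r hr => by rw [← hC r hr, sub_add_cancel]⟩

lemma eq_log_or_eq_two_div_mul_log (hIo : IsOpen I) (hIc : IsPreconnected I) (hpos : I ⊆ Ioi 0)
    (hv : ∀ r ∈ I, HasDerivAt v (w r / r) r) (hw : DifferentiableOn ℝ w I)
    {U : Set ℝ} (hU : IsOpen U) (hUcone : ∀ y ∈ U, ∀ t : ℝ, 0 < t → y * t ∈ U)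
    (hode : ∀ r ∈ I, w r * (w r + 2) ∈ U → r * deriv w r = (1 - m) * (w r * (w r + 2) / 2))
    (hr₀ : r₀ ∈ I) (hwr₀ : w r₀ * (w r₀ + 2) ∈ U) :
    (m = 1 ∧ ∃ C : ℝ, ∀ r ∈ I, v r = C + w r₀ * Real.log r) ∨
    (m ≠ 1 ∧ ∃ α β : ℝ, 0 < α ∧ 0 < β ∧ ∀ r ∈ I,
      0 < -α * w r₀ * r ^ (1 - m) + β * (w r₀ + 2) ∧
        v r = 2 / (m - 1) * Real.log (-α * w r₀ * r ^ (1 - m) + β * (w r₀ + 2))) := by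
  replace hode (r : ℝ) (hr : r ∈ I) :=
    hode r hr (slope_mul_add_two_mem hIo hIc hpos hv hw hU hUcone hode hr₀ hwr₀ hr)
  refine (eq_or_ne m 1).imp (fun hm => ⟨hm, ?_⟩)
    fun hm => ⟨hm, eq_two_div_mul_log hIo hIc hpos hv hw hm hode hr₀⟩
  have w_eq (r : ℝ) (hr : r ∈ I) : w r = w r₀ :=
    hIo.is_const_of_deriv_eq_zero hIc hw
      (fun s hs => (mul_eq_zero.1 (by simpa [hm] using hode s hs)).resolve_left
        (ne_of_gt (hpos hs))) hr hr₀
  exact exists_eq_const_add_mul_log hIo hIc hpos fun r hr => w_eq r hr ▸ hv r hr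

lemma eq_log_or_eq_two_div_mul_log_of_neg (hIo : IsOpen I) (hIc : IsPreconnected I)
    (hpos : I ⊆ Ioi 0) (hv : ∀ r ∈ I, HasDerivAt v (w r / r) r) (hw : DifferentiableOn ℝ w I)
    (hode : ∀ r ∈ I, w r * (w r + 2) < 0 → r * deriv w r = (1 - m) * (w r * (w r + 2) / 2))
    (hr₀ : r₀ ∈ I) (hwr₀ : w r₀ * (w r₀ + 2) < 0) :
    (m = 1 ∧ ∃ C₁ C₂ : ℝ, -2 < C₂ ∧ C₂ < 0 ∧ ∀ r ∈ I, v r = C₁ + C₂ * Real.log r) ∨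
    (m ≠ 1 ∧ ∃ C₃ C₄ : ℝ, 0 < C₃ ∧ 0 < C₄ ∧
      ∀ r ∈ I, v r = 2 / (m - 1) * Real.log (C₃ * r ^ (1 - m) + C₄)) := by
  have w_neg : w r₀ < 0 := by nlinarith
  have w_add_two_pos : 0 < w r₀ + 2 := by nlinarith
  refine (eq_log_or_eq_two_div_mul_log hIo hIc hpos hv hw isOpen_Iio
    (fun y hy t ht => mul_neg_of_neg_of_pos hy ht) hode hr₀ hwr₀).imp ?_ ?_
  · rintro ⟨hm, C, hC⟩
    exact ⟨hm, C, w r₀, by linarith, w_neg, hC⟩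
  · rintro ⟨hm, α, β, hα, hβ, h⟩
    exact ⟨hm, -α * w r₀, β * (w r₀ + 2), mul_pos_of_neg_of_neg (neg_neg_of_pos hα) w_neg,
      mul_pos hβ w_add_two_pos, fun r hr => (h r hr).2⟩

lemma eq_log_or_eq_two_div_mul_log_of_pos (hIo : IsOpen I) (hIc : IsPreconnected I)
    (hpos : I ⊆ Ioi 0) (hv : ∀ r ∈ I, HasDerivAt v (w r / r) r) (hw : DifferentiableOn ℝ w I)
    (hode : ∀ r ∈ I, 0 < w r * (w r + 2) → r * deriv w r = (1 - m) * (w r * (w r + 2) / 2))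
    (hr₀ : r₀ ∈ I) (hwr₀ : 0 < w r₀ * (w r₀ + 2)) :
    (m = 1 ∧ ∃ C₅ C₆ : ℝ, (C₆ < -2 ∨ 0 < C₆) ∧ ∀ r ∈ I, v r = C₅ + C₆ * Real.log r) ∨
    (m ≠ 1 ∧ ∃ C₇ C₈ : ℝ, C₇ * C₈ < 0 ∧ ∀ r ∈ I, 0 < C₇ * r ^ (1 - m) + C₈ ∧
      v r = 2 / (m - 1) * Real.log (C₇ * r ^ (1 - m) + C₈)) := by
  refine (eq_log_or_eq_two_div_mul_log hIo hIc hpos hv hw isOpen_Ioi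
    (fun y hy t ht => mul_pos hy ht) hode hr₀ hwr₀).imp ?_ ?_
  · rintro ⟨hm, C, hC⟩
    have w_range : w r₀ < -2 ∨ 0 < w r₀ := by
      by_contra! h
      nlinarith
    exact ⟨hm, C, w r₀, w_range, hC⟩
  · rintro ⟨hm, α, β, hα, hβ, h⟩
    have product_neg : -α * w r₀ * (β * (w r₀ + 2)) < 0 := by
      linear_combination mul_pos (mul_pos hα hβ) hwr₀
    exact ⟨hm, -α * w r₀, β * (w r₀ + 2), product_neg, h⟩

lemma eq_const_or_eq_const_sub_two_mul_log (hIo : IsOpen I) (hIc : IsPreconnected I)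
    (hpos : I ⊆ Ioi 0) (hv : ∀ r ∈ I, HasDerivAt v (w r / r) r) (hw : ContinuousOn w I)
    (hzero : ∀ r ∈ I, w r * (w r + 2) = 0) :
    ∃ C : ℝ, (∀ r ∈ I, v r = C) ∨ (∀ r ∈ I, v r = C - 2 * Real.log r) := by
  have mapsTo : MapsTo w I {0, -2} := fun r hr =>
    (mul_eq_zero.1 (hzero r hr)).imp id eq_neg_of_add_eq_zero_left
  obtain ⟨c, hc, w_eq⟩ := hIc.eqOn_const_of_mapsTo (toFinite _).isDiscrete hw mapsTo ⟨0, by simp⟩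
  obtain ⟨C, hC⟩ := exists_eq_const_add_mul_log hIo hIc hpos fun r hr => w_eq hr ▸ hv r hr
  rcases hc with rfl | rfl
  · exact ⟨C, Or.inl fun r hr => by simpa using hC r hr⟩
  · exact ⟨C, Or.inr fun r hr => by rw [hC r hr]; ring⟩

end SlopeODE

theorem radial_classification_general {n : ℕ} [NeZero n] {Γ : Set (Fin n → ℝ)}
    (hsymm : ∀ σ : Equiv.Perm (Fin n), ∀ lam ∈ Γ, lam ∘ σ ∈ Γ)
    (hcone : ∀ lam ∈ Γ, ∀ t : ℝ, 0 < t → t • lam ∈ Γ)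
    (hadd : ∀ lam ∈ Γ, ∀ mu ∈ GammaN n, lam + mu ∈ Γ)
    {I : Set ℝ} (hIo : IsOpen I) (hIc : IsPreconnected I) (hpos : I ⊆ Ioi 0) {v : ℝ → ℝ}
    (hv : DifferentiableOn ℝ v I) (hv' : DifferentiableOn ℝ (deriv v) I)
    (hsol : ∀ x : Euc n, ‖x‖ ∈ I → EigIn (mobius (fun y => v ‖y‖) x) (frontier Γ)) :
    (muPlus Γ = 1 ∧ ∃ C₁ C₂ : ℝ, -2 < C₂ ∧ C₂ < 0 ∧
      ∀ r ∈ I, v r = C₁ + C₂ * Real.log r) ∨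
    (muPlus Γ ≠ 1 ∧ muPlus Γ ≠ ⊤ ∧ ∃ C₃ C₄ : ℝ, 0 < C₃ ∧ 0 < C₄ ∧
      ∀ r ∈ I, v r = 2 / ((muPlus Γ).toReal - 1) *
        Real.log (C₃ * r ^ (1 - (muPlus Γ).toReal) + C₄)) ∨
    (muMinus Γ = 1 ∧ ∃ C₅ C₆ : ℝ, (C₆ < -2 ∨ 0 < C₆) ∧
      ∀ r ∈ I, v r = C₅ + C₆ * Real.log r) ∨
    (muMinus Γ ≠ 1 ∧ muMinus Γ ≠ ⊤ ∧ ∃ C₇ C₈ : ℝ, C₇ * C₈ < 0 ∧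
      ∀ r ∈ I, 0 < C₇ * r ^ (1 - (muMinus Γ).toReal) + C₈ ∧
        v r = 2 / ((muMinus Γ).toReal - 1) *
          Real.log (C₇ * r ^ (1 - (muMinus Γ).toReal) + C₈)) ∨
    (∃ C : ℝ, (∀ r ∈ I, v r = C) ∨ (∀ r ∈ I, v r = C - 2 * Real.log r)) := by
  have v_deriv (r : ℝ) (hr : r ∈ I) : HasDerivAt v (logSlope v r / r) r :=
    hasDerivAt_logSlope_div (ne_of_gt (hpos hr)) (hv.differentiableAt (hIo.mem_nhds hr))
  have slope_diff : DifferentiableOn ℝ (logSlope v) I := differentiableOn_id.mul hv'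
  have tuple_mem (r : ℝ) (hr : r ∈ I) := headTail_logSlope_mem_frontier hsymm hcone (hpos hr)
    (hv.eventually_differentiableAt (hIo.mem_nhds hr)) (hv'.differentiableAt (hIo.mem_nhds hr))
    fun x hx => hsol x (hx ▸ hr)
  have ode_of_neg (r : ℝ) (hr : r ∈ I) (h : logSlope v r * (logSlope v r + 2) < 0) :=
    muPlus_ne_top_and_eq_mul hcone hadd (by linarith) (tuple_mem r hr)
  have ode_of_pos (r : ℝ) (hr : r ∈ I) (h : 0 < logSlope v r * (logSlope v r + 2)) :=
    muMinus_ne_top_and_eq_mul hcone hadd (by linarith) (tuple_mem r hr)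
  by_cases hneg : ∃ r ∈ I, logSlope v r * (logSlope v r + 2) < 0
  · obtain ⟨r₀, hr₀, hneg⟩ := hneg
    have profile := eq_log_or_eq_two_div_mul_log_of_neg hIo hIc hpos v_deriv slope_diff
      (fun r hr h => (ode_of_neg r hr h).2) hr₀ hneg
    rw [Ne, ereal_toReal_eq_one_iff] at profile
    exact profile.imp_right fun ⟨hm, h⟩ => .inl ⟨hm, (ode_of_neg r₀ hr₀ hneg).1, h⟩
  by_cases hpos' : ∃ r ∈ I, 0 < logSlope v r * (logSlope v r + 2)
  · obtain ⟨r₀, hr₀, h₀⟩ := hpos'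
    have profile := eq_log_or_eq_two_div_mul_log_of_pos hIo hIc hpos v_deriv slope_diff
      (fun r hr h => (ode_of_pos r hr h).2) hr₀ h₀
    rw [Ne, ereal_toReal_eq_one_iff] at profile
    exact .inr (.inr (profile.imp_right fun ⟨hm, h⟩ => .inl ⟨hm, (ode_of_pos r₀ hr₀ h₀).1, h⟩))
  push Not at hneg hpos'
  exact .inr (.inr (.inr (.inr (eq_const_or_eq_const_sub_two_mul_log hIo hIc hpos v_deriv
    slope_diff.continuousOn fun r hr => le_antisymm (hpos' r hr) (hneg r hr)))))

/-- **Classification of smooth radial solutions** (Lemma 3.1): any `C²` radial solution of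
`λ(A[v]) ∈ ∂Γ` on an annulus `{a < |x| < b}` (with `0 ≤ a < b ≤ ∞`) is the restriction of
one of the explicit families (a)–(e). -/
theorem radial_classification
    {n : ℕ} (hn : 2 ≤ n) (Γ : Set (Fin n → ℝ)) (hΓ : CondC Γ)
    (a : ℝ) (b : EReal) (ha : 0 ≤ a) (hab : (a : EReal) < b)
    (I : Set ℝ) (hI : I = {r : ℝ | a < r ∧ (r : EReal) < b})
    (v : ℝ → ℝ) (hreg : ContDiffOn ℝ 2 v I)
    (hsol : ∀ x : Euc n, a < ‖x‖ → (‖x‖ : EReal) < b →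
      EigIn (mobius (fun y => v ‖y‖) x) (frontier Γ)) :
    -- (a)
    (muPlus Γ = 1 ∧ ∃ C₁ C₂ : ℝ, -2 < C₂ ∧ C₂ < 0 ∧
      ∀ r ∈ I, v r = C₁ + C₂ * Real.log r) ∨
    -- (b)
    (muPlus Γ ≠ 1 ∧ muPlus Γ ≠ ⊤ ∧ ∃ C₃ C₄ : ℝ, 0 < C₃ ∧ 0 < C₄ ∧
      ∀ r ∈ I, v r = 2 / ((muPlus Γ).toReal - 1) *
        Real.log (C₃ * r ^ (1 - (muPlus Γ).toReal) + C₄)) ∨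
    -- (c)
    (muMinus Γ = 1 ∧ ∃ C₅ C₆ : ℝ, (C₆ < -2 ∨ 0 < C₆) ∧
      ∀ r ∈ I, v r = C₅ + C₆ * Real.log r) ∨
    -- (d)
    (muMinus Γ ≠ 1 ∧ muMinus Γ ≠ ⊤ ∧ ∃ C₇ C₈ : ℝ, C₇ * C₈ < 0 ∧
      ∀ r ∈ I, 0 < C₇ * r ^ (1 - (muMinus Γ).toReal) + C₈ ∧
        v r = 2 / ((muMinus Γ).toReal - 1) *
          Real.log (C₇ * r ^ (1 - (muMinus Γ).toReal) + C₈)) ∨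
    -- (e)
    (∃ C : ℝ, (∀ r ∈ I, v r = C) ∨ (∀ r ∈ I, v r = C - 2 * Real.log r)) := by
  subst hI
  obtain ⟨-, -, -, hsymm, hcone, hadd⟩ := hΓ
  have : NeZero n := ⟨by lia⟩
  have isOpen_I := isOpen_setOf_lt_and_coe_lt a b
  exact radial_classification_general hsymm hcone hadd isOpen_I
    (isPreconnected_setOf_lt_and_coe_lt a b) (fun r hr => ha.trans_lt hr.1)
    (hreg.differentiableOn two_ne_zero)
    ((hreg.deriv_of_isOpen (m := 1) isOpen_I one_add_one_eq_two.le).differentiableOn one_ne_zero)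
    fun x hx => hsol x hx.1 hx.2
end
end

section
/- Let n ≥ 2 and let Γ ⊂ ℝⁿ satisfy condition (C) with μ_Γ⁺ = +∞ (equivalently, (−c,1,…,1) ∈ closure(Γ) for every c > 0). Then for any constants C₁, C₂ ∈ ℝ, the function v(x) := max{C₁ − 2·log|x| , C₂} is a continuous viscosity solution of λ(A[v]) ∈ ∂Γ on ℝⁿ∖{0}. -/
open Filter Topology MeasureTheory Metric Set
open scoped BigOperators ENNReal NNReal

noncomputable section

/-
The constants and `C - 2 log |x|` are the conformal factors of the flat metric and of its pullback
under an inversion, so both have vanishing Möbius Hessian; a test function touching either from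
above has a negative semidefinite Möbius Hessian, and a maximum of subsolutions is a subsolution.

A test function touching a radial function `f |x|` from below has a radial gradient `p x₀`, and on
tangential vectors its Hessian is at most that of a radial function, `p |a|²`. So the Möbius Hessian
is bounded below on `x₀ᗮ` by a positive multiple of `-p (1 + p |x₀|² / 2)`. This is nonnegative when
`f` is nonincreasing and `f r + 2 log r` is nondecreasing, as then `-2 ≤ p |x₀|² ≤ 0`. Hence at most
one eigenvalue is negative, which `μ_Γ⁺ = +∞` allows.
-/

section SecondDerivative

variable {E F : Type*} [NormedAddCommGroup E] [NormedSpace ℝ E]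
  [NormedAddCommGroup F] [NormedSpace ℝ F]

lemma deriv_deriv_nonpos_of_isLocalMax {f : ℝ → ℝ} {t : ℝ} (hmax : IsLocalMax f t)
    (hf : ContinuousAt f t) : deriv (deriv f) t ≤ 0 := by
  by_contra! hpos
  have hmin : IsLocalMin f t := isLocalMin_of_deriv_deriv_pos hpos hmax.deriv_eq_zero hf
  have hconst : f =ᶠ[𝓝 t] fun _ => f t := by
    filter_upwards [hmin, hmax] with s hge hle using le_antisymm hle hge
  have hzero : deriv (deriv f) t = 0 := by simp [hconst.deriv.deriv_eq]
  exact hpos.ne' hzero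

lemma differentiableAt_fderiv_of_contDiffAt_two {f : E → F} {x : E} (hf : ContDiffAt ℝ 2 f x) :
    DifferentiableAt ℝ (fderiv ℝ f) x :=
  (hf.fderiv_right (m := 1) (by norm_num)).differentiableAt one_ne_zero

lemma fderiv_fderiv_apply {f : E → F} {x : E} (hf : ContDiffAt ℝ 2 f x) (a b : E) :
    fderiv ℝ (fderiv ℝ f) x a b = fderiv ℝ (fun y => fderiv ℝ f y b) x a := by
  have hderiv := (differentiableAt_fderiv_of_contDiffAt_two hf).hasFDerivAt.clm_apply
    (hasFDerivAt_const b x)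
  simp [hderiv.fderiv]

lemma deriv_deriv_comp {f : E → F} {γ γ' : ℝ → E} {γ'' : E} {t : ℝ}
    (hf : ContDiffAt ℝ 2 f (γ t)) (hγ : ∀ᶠ s in 𝓝 t, HasDerivAt γ (γ' s) s)
    (hγ' : HasDerivAt γ' γ'' t) :
    deriv (deriv fun s => f (γ s)) t =
      fderiv ℝ (fderiv ℝ f) (γ t) (γ' t) (γ' t) + fderiv ℝ f (γ t) γ'' := by
  have hf_near : ∀ᶠ y in 𝓝 (γ t), DifferentiableAt ℝ f y :=
    (hf.eventually (by simp)).mono fun y hy => hy.differentiableAt two_ne_zero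
  have hfirst : deriv (fun s => f (γ s)) =ᶠ[𝓝 t] fun s => fderiv ℝ f (γ s) (γ' s) := by
    filter_upwards [hγ, hγ.self_of_nhds.continuousAt.eventually hf_near] with s hs hfs
    exact (hfs.hasFDerivAt.comp_hasDerivAt s hs).deriv
  rw [hfirst.deriv_eq]
  exact (((differentiableAt_fderiv_of_contDiffAt_two hf).hasFDerivAt.comp_hasDerivAt t
    hγ.self_of_nhds).clm_apply hγ').deriv

lemma fderiv_fderiv_nonpos_of_isLocalMax {f : E → ℝ} {x : E} (hmax : IsLocalMax f x)
    (hf : ContDiffAt ℝ 2 f x) (a : E) : fderiv ℝ (fderiv ℝ f) x a a ≤ 0 := by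
  have hline (t : ℝ) : HasDerivAt (fun s : ℝ => x + s • a) a t := by
    simpa using ((hasDerivAt_id t).smul_const a).const_add x
  have hcont := (hline 0).continuousAt
  have hx : x + (0 : ℝ) • a = x := by simp
  have hsnd := deriv_deriv_comp (f := f) (hx.symm ▸ hf) (.of_forall hline) (hasDerivAt_const 0 a)
  simp only [zero_smul, add_zero, map_zero] at hsnd
  have hcomp : IsLocalMax (fun s : ℝ => f (x + s • a)) 0 :=
    IsLocalMax.comp_continuous (hx.symm ▸ hmax) hcont
  have hnonpos := deriv_deriv_nonpos_of_isLocalMax hcomp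
    (ContinuousAt.comp (hx.symm ▸ hf.continuousAt) hcont)
  rwa [hsnd] at hnonpos

lemma fderiv_fderiv_sub {f g : E → F} {x : E} (hf : ContDiffAt ℝ 2 f x)
    (hg : ContDiffAt ℝ 2 g x) :
    fderiv ℝ (fderiv ℝ (f - g)) x = fderiv ℝ (fderiv ℝ f) x - fderiv ℝ (fderiv ℝ g) x := by
  have hfirst : fderiv ℝ (f - g) =ᶠ[𝓝 x] fderiv ℝ f - fderiv ℝ g := by
    filter_upwards [hf.eventually (by simp), hg.eventually (by simp)] with y hfy hgy
    exact fderiv_sub (hfy.differentiableAt two_ne_zero) (hgy.differentiableAt two_ne_zero)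
  rw [hfirst.fderiv_eq]
  exact fderiv_sub (differentiableAt_fderiv_of_contDiffAt_two hf)
    (differentiableAt_fderiv_of_contDiffAt_two hg)

end SecondDerivative

section RadialMonotone

variable {E : Type*} [NormedAddCommGroup E] {φ : E → ℝ} {f : ℝ → ℝ} {x : E}

lemma isLocalMaxOn_of_le_antitoneOn_norm (hx : x ≠ 0) (hf : AntitoneOn f (Ioi 0))
    (heq : φ x = f ‖x‖) (hle : ∀ᶠ y in 𝓝 x, φ y ≤ f ‖y‖) :
    IsLocalMaxOn φ {y | ‖x‖ ≤ ‖y‖} x := by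
  filter_upwards [nhdsWithin_le_nhds hle, self_mem_nhdsWithin] with y hy hxy
  have hx' : 0 < ‖x‖ := norm_pos_iff.2 hx
  exact (hy.trans (hf hx' (hx'.trans_le hxy) hxy)).trans_eq heq.symm

variable [NormedSpace ℝ E]

lemma fderiv_self_nonpos_of_isLocalMaxOn (hφ : DifferentiableAt ℝ φ x)
    (hmax : IsLocalMaxOn φ {y | ‖x‖ ≤ ‖y‖} x) : fderiv ℝ φ x x ≤ 0 := by
  refine hmax.hasFDerivWithinAt_nonpos hφ.hasFDerivAt.hasFDerivWithinAt
    (mem_posTangentConeAt_of_segment_subset ?_)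
  rw [segment_eq_image', image_subset_iff]
  rintro t ⟨ht, -⟩
  have hray : x + t • (x + x - x) = (1 + t) • x := by module
  rw [mem_preimage, hray, mem_ofPred_eq, norm_smul, Real.norm_of_nonneg (by positivity)]
  nlinarith [norm_nonneg x]

end RadialMonotone

section InnerProductSpace

variable {E : Type*} [NormedAddCommGroup E] [InnerProductSpace ℝ E]

lemma hasFDerivAt_log_norm {x : E} (hx : x ≠ 0) :
    HasFDerivAt (fun y : E => Real.log ‖y‖) ((‖x‖ ^ 2)⁻¹ • innerSL ℝ x) x := by
  have hsq : HasFDerivAt (fun y : E => Real.log (‖y‖ ^ 2) / 2)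
      ((2 : ℝ)⁻¹ • (‖x‖ ^ 2)⁻¹ • 2 • innerSL ℝ x) x := by
    simpa only [div_eq_inv_mul] using!
      (((hasStrictFDerivAt_norm_sq x).hasFDerivAt.log (by simpa using hx)).const_mul (2 : ℝ)⁻¹)
  convert! hsq using 1
  · ext y
    simp [Real.log_pow]
  · ext y
    simp only [smul_apply, innerSL_apply_apply, smul_eq_mul, nsmul_eq_mul, Nat.cast_ofNat]
    ring

lemma contDiffAt_log_norm {x : E} (hx : x ≠ 0) :
    ContDiffAt ℝ 2 (fun y : E => Real.log ‖y‖) x :=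
  (contDiffAt_norm ℝ hx).log (norm_ne_zero_iff.2 hx)

lemma fderiv_fderiv_log_norm {x : E} (hx : x ≠ 0) (a b : E) :
    fderiv ℝ (fderiv ℝ fun y : E => Real.log ‖y‖) x a b =
      inner ℝ a b / ‖x‖ ^ 2 - 2 * inner ℝ x a * inner ℝ x b / ‖x‖ ^ 4 := by
  have hfirst : (fun y => fderiv ℝ (fun z : E => Real.log ‖z‖) y b) =ᶠ[𝓝 x]
      fun y => (‖y‖ ^ 2)⁻¹ * inner ℝ y b := by
    filter_upwards [isOpen_ne.mem_nhds hx] with y hy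
    rw [(hasFDerivAt_log_norm hy).fderiv, smul_apply, innerSL_apply_apply, smul_eq_mul]
  have hinner : HasFDerivAt (fun y : E => inner ℝ y b) (innerSL ℝ b) x := by
    simpa only [real_inner_comm] using! (innerSL ℝ b).hasFDerivAt
  have hinv : HasFDerivAt (fun y : E => (‖y‖ ^ 2)⁻¹) (-((‖x‖ ^ 2) ^ 2)⁻¹ • 2 • innerSL ℝ x) x := by
    simpa using! (hasDerivAt_inv (by simpa using hx)).comp_hasFDerivAt x
      (hasStrictFDerivAt_norm_sq x).hasFDerivAt
  rw [fderiv_fderiv_apply (contDiffAt_log_norm hx), hfirst.fderiv_eq,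
    (hinv.fun_mul hinner).fderiv]
  simp only [neg_smul, smul_neg, add_apply, smul_apply, innerSL_apply_apply, real_inner_comm,
    smul_eq_mul, neg_apply, nsmul_eq_mul, Nat.cast_ofNat]
  field_simp
  ring

lemma eq_smul_innerSL_of_forall_inner_eq_zero {L : E →L[ℝ] ℝ} {x : E}
    (hL : ∀ w, inner ℝ x w = 0 → L w = 0) : L = (L x / ‖x‖ ^ 2) • innerSL ℝ x := by
  rcases eq_or_ne x 0 with rfl | hx
  · ext w
    simp [hL w]
  ext w
  have horth : inner ℝ x (w - (inner ℝ x w / ‖x‖ ^ 2) • x) = 0 := by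
    have hx' : ‖x‖ ≠ 0 := norm_ne_zero_iff.2 hx
    rw [inner_sub_right, inner_smul_right, real_inner_self_eq_norm_sq]
    field_simp
    ring
  have hLw := hL _ horth
  rw [map_sub, map_smul, smul_eq_mul, sub_eq_zero] at hLw
  rw [hLw, smul_apply, innerSL_apply_apply, smul_eq_mul]
  ring

section Circle

variable {x w : E}

lemma norm_cos_smul_add_sin_smul (horth : inner ℝ x w = 0) (hnorm : ‖w‖ = ‖x‖) (t : ℝ) :
    ‖Real.cos t • x + Real.sin t • w‖ = ‖x‖ := by
  rw [← sq_eq_sq₀ (norm_nonneg _) (norm_nonneg _), norm_add_sq_real]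
  simp only [inner_smul_left, inner_smul_right, horth, norm_smul, mul_pow, hnorm, Real.norm_eq_abs,
    sq_abs, mul_zero, add_zero]
  linear_combination ‖x‖ ^ 2 * Real.cos_sq_add_sin_sq t

lemma hasDerivAt_cos_smul_add_sin_smul (x w : E) (t : ℝ) :
    HasDerivAt (fun s => Real.cos s • x + Real.sin s • w)
      (-Real.sin t • x + Real.cos t • w) t :=
  ((Real.hasDerivAt_cos t).smul_const x).add ((Real.hasDerivAt_sin t).smul_const w)

lemma hasDerivAt_neg_sin_smul_add_cos_smul (x w : E) (t : ℝ) :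
    HasDerivAt (fun s => -Real.sin s • x + Real.cos s • w)
      (-Real.cos t • x + -Real.sin t • w) t :=
  ((Real.hasDerivAt_sin t).neg.smul_const x).add ((Real.hasDerivAt_cos t).smul_const w)

variable {f : E → ℝ}

lemma isLocalMax_comp_circle_of_isLocalMaxOn_sphere
    (hmax : IsLocalMaxOn f (sphere 0 ‖x‖) x) (horth : inner ℝ x w = 0) (hnorm : ‖w‖ = ‖x‖) :
    IsLocalMax (fun t : ℝ => f (Real.cos t • x + Real.sin t • w)) 0 := by
  have hcont := (hasDerivAt_cos_smul_add_sin_smul x w 0).continuousAt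
  have hx : Real.cos 0 • x + Real.sin 0 • w = x := by simp
  have htendsto : Tendsto (fun t : ℝ => Real.cos t • x + Real.sin t • w) (𝓝 0)
      (𝓝[sphere 0 ‖x‖] x) := by
    refine tendsto_nhdsWithin_iff.2 ⟨by simpa only [ContinuousAt, hx] using hcont, ?_⟩
    exact .of_forall fun t => by simpa using norm_cos_smul_add_sin_smul horth hnorm t
  simpa only [IsLocalMax, IsMaxFilter, hx] using htendsto.eventually hmax

lemma fderiv_eq_zero_of_isLocalMaxOn_sphere_of_norm_eq (hf : DifferentiableAt ℝ f x)
    (hmax : IsLocalMaxOn f (sphere 0 ‖x‖) x) (horth : inner ℝ x w = 0) (hnorm : ‖w‖ = ‖x‖) :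
    fderiv ℝ f x w = 0 := by
  have hx : Real.cos 0 • x + Real.sin 0 • w = x := by simp
  have hderiv := HasFDerivAt.comp_hasDerivAt (0 : ℝ) (hx.symm ▸ hf.hasFDerivAt)
    (hasDerivAt_cos_smul_add_sin_smul x w 0)
  simpa using (isLocalMax_comp_circle_of_isLocalMaxOn_sphere hmax horth hnorm).hasDerivAt_eq_zero
    hderiv

lemma fderiv_fderiv_le_of_isLocalMaxOn_sphere_of_norm_eq (hf : ContDiffAt ℝ 2 f x)
    (hmax : IsLocalMaxOn f (sphere 0 ‖x‖) x) (horth : inner ℝ x w = 0) (hnorm : ‖w‖ = ‖x‖) :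
    fderiv ℝ (fderiv ℝ f) x w w ≤ fderiv ℝ f x x := by
  have hx : Real.cos 0 • x + Real.sin 0 • w = x := by simp
  have hcont := (hasDerivAt_cos_smul_add_sin_smul x w 0).continuousAt
  have hsnd := deriv_deriv_comp (f := f) (hx.symm ▸ hf)
    (.of_forall (hasDerivAt_cos_smul_add_sin_smul x w))
    (hasDerivAt_neg_sin_smul_add_cos_smul x w 0)
  have hnonpos := deriv_deriv_nonpos_of_isLocalMax
    (isLocalMax_comp_circle_of_isLocalMaxOn_sphere hmax horth hnorm)
    (ContinuousAt.comp (hx.symm ▸ hf.continuousAt) hcont)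
  rw [hsnd] at hnonpos
  simpa using hnonpos

lemma norm_div_norm_smul (hw : w ≠ 0) : ‖(‖x‖ / ‖w‖) • w‖ = ‖x‖ := by
  rw [norm_smul, norm_div, norm_norm, norm_norm, div_mul_cancel₀ _ (norm_ne_zero_iff.2 hw)]

lemma fderiv_eq_zero_of_isLocalMaxOn_sphere (hx : x ≠ 0) (hf : DifferentiableAt ℝ f x)
    (hmax : IsLocalMaxOn f (sphere 0 ‖x‖) x) (horth : inner ℝ x w = 0) :
    fderiv ℝ f x w = 0 := by
  rcases eq_or_ne w 0 with rfl | hw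
  · simp
  have hscaled := fderiv_eq_zero_of_isLocalMaxOn_sphere_of_norm_eq hf hmax
    (by rw [inner_smul_right, horth, mul_zero]) (norm_div_norm_smul hw)
  rw [map_smul, smul_eq_mul] at hscaled
  exact (mul_eq_zero.1 hscaled).resolve_left (by positivity)

lemma fderiv_fderiv_le_of_isLocalMaxOn_sphere (hx : x ≠ 0) (hf : ContDiffAt ℝ 2 f x)
    (hmax : IsLocalMaxOn f (sphere 0 ‖x‖) x) (horth : inner ℝ x w = 0) :
    fderiv ℝ (fderiv ℝ f) x w w ≤ fderiv ℝ f x x / ‖x‖ ^ 2 * ‖w‖ ^ 2 := by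
  rcases eq_or_ne w 0 with rfl | hw
  · simp
  have hscaled := fderiv_fderiv_le_of_isLocalMaxOn_sphere_of_norm_eq hf hmax
    (by rw [inner_smul_right, horth, mul_zero]) (norm_div_norm_smul hw)
  simp only [map_smul, smul_apply, smul_eq_mul] at hscaled
  calc fderiv ℝ (fderiv ℝ f) x w w
      = ‖x‖ / ‖w‖ * (‖x‖ / ‖w‖ * fderiv ℝ (fderiv ℝ f) x w w) / ‖x‖ ^ 2 * ‖w‖ ^ 2 := by
        field_simp
    _ ≤ fderiv ℝ f x x / ‖x‖ ^ 2 * ‖w‖ ^ 2 := by gcongr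

end Circle

lemma neg_two_le_fderiv_self_of_le_norm {φ : E → ℝ} {f : ℝ → ℝ} {x : E} (hx : x ≠ 0)
    (hφ : DifferentiableAt ℝ φ x) (hf : MonotoneOn (fun r => f r + 2 * Real.log r) (Ioi 0))
    (heq : φ x = f ‖x‖) (hle : ∀ᶠ y in 𝓝 x, φ y ≤ f ‖y‖) : -2 ≤ fderiv ℝ φ x x := by
  have hx' : 0 < ‖x‖ := norm_pos_iff.2 hx
  have hmax : IsLocalMaxOn (fun y => φ y + 2 * Real.log ‖y‖) (closedBall 0 ‖x‖) x := by
    filter_upwards [nhdsWithin_le_nhds hle, nhdsWithin_le_nhds (isOpen_ne.mem_nhds hx),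
      self_mem_nhdsWithin] with y hy hy0 hyx
    have hmono := hf (norm_pos_iff.2 hy0) hx' (mem_closedBall_zero_iff.1 hyx)
    simp only at hmono
    linarith
  have hcone : -x ∈ posTangentConeAt (closedBall 0 ‖x‖) x :=
    mem_posTangentConeAt_of_segment_subset
      ((convex_closedBall 0 ‖x‖).segment_subset (by simp) (by simp))
  have hderiv := hφ.hasFDerivAt.add ((hasFDerivAt_log_norm hx).const_mul 2)
  have hnonpos := hmax.hasFDerivWithinAt_nonpos hderiv.hasFDerivWithinAt hcone
  have hlog : (‖x‖ ^ 2)⁻¹ * inner ℝ x x = 1 := by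
    rw [real_inner_self_eq_norm_sq, inv_mul_cancel₀ (by positivity)]
  simp only [add_apply, map_neg, smul_apply, innerSL_apply_apply, smul_eq_mul, hlog] at hnonpos
  linarith

end InnerProductSpace

section Eigenvalues

open Matrix

variable {ι : Type*} [Fintype ι] [DecidableEq ι] {M : Matrix ι ι ℝ}

lemma eigenvalues_nonpos_of_dotProduct_mulVec_nonpos (hM : M.IsHermitian)
    (h : ∀ a, a ⬝ᵥ M *ᵥ a ≤ 0) : hM.eigenvalues ≤ 0 := fun i => by
  simpa [hM.eigenvalues_eq] using h (hM.eigenvectorBasis i)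

lemma dotProduct_eigenvectorBasis (hM : M.IsHermitian) (i j : ι) :
    (hM.eigenvectorBasis i).ofLp ⬝ᵥ (hM.eigenvectorBasis j).ofLp = if i = j then 1 else 0 := by
  rw [← orthonormal_iff_ite.1 hM.eigenvectorBasis.orthonormal i j]
  simp [PiLp.inner_apply, dotProduct, mul_comm]

lemma dotProduct_mulVec_smul_eigenvectorBasis_add (hM : M.IsHermitian) {i j : ι} (hij : i ≠ j)
    (α β : ℝ) :
    (α • hM.eigenvectorBasis i + β • hM.eigenvectorBasis j).ofLp ⬝ᵥ
        M *ᵥ (α • hM.eigenvectorBasis i + β • hM.eigenvectorBasis j).ofLp =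
      α ^ 2 * hM.eigenvalues i + β ^ 2 * hM.eigenvalues j := by
  simp only [WithLp.ofLp_add, WithLp.ofLp_smul, mulVec_add, mulVec_smul,
    hM.mulVec_eigenvectorBasis, dotProduct_add, add_dotProduct, dotProduct_smul, smul_dotProduct,
    dotProduct_eigenvectorBasis, hij, hij.symm, if_true, if_false, smul_eq_mul]
  ring

lemma eigenvalues_nonneg_of_neg_of_ne (hM : M.IsHermitian) (x : EuclideanSpace ℝ ι)
    (h : ∀ a : EuclideanSpace ℝ ι, inner ℝ x a = 0 → 0 ≤ a.ofLp ⬝ᵥ M *ᵥ a.ofLp) {i j : ι}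
    (hij : i ≠ j) (hi : hM.eigenvalues i < 0) : 0 ≤ hM.eigenvalues j := by
  set u := hM.eigenvectorBasis i with hu
  set w := hM.eigenvectorBasis j with hw
  have hquad (α β : ℝ) (horth : inner ℝ x (α • u + β • w) = 0) :
      0 ≤ α ^ 2 * hM.eigenvalues i + β ^ 2 * hM.eigenvalues j := by
    simpa only [hu, hw, dotProduct_mulVec_smul_eigenvectorBasis_add hM hij] using h _ horth
  rcases eq_or_ne (inner ℝ x u) 0 with hxu | hxu
  · have hu_quad := hquad 1 0 (by simp [hxu])
    linarith
  · have hcomb := hquad (inner ℝ x w) (-inner ℝ x u)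
      (by simp only [inner_add_right, inner_smul_right]; ring)
    have hxu_sq : 0 < (-inner ℝ x u) ^ 2 := sq_pos_of_ne_zero (neg_ne_zero.2 hxu)
    nlinarith [sq_nonneg (inner ℝ x w)]

end Eigenvalues

/-- The condition `μ_Γ⁺ = +∞`, in the form `(-c, 1, …, 1) ∈ closure Γ` for all `c > 0`, which avoids
a supremum in the extended reals. -/
def MuPlusEqTop {n : ℕ} (Γ : Set (Fin n → ℝ)) : Prop :=
  ∀ c : ℝ, 0 < c → (fun i : Fin n => if i.val = 0 then -c else 1) ∈ closure Γ

namespace CondC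

variable {n : ℕ} {Γ : Set (Fin n → ℝ)}

lemma isUpperSet_s7 (hΓ : CondC Γ) : IsUpperSet Γ := by
  obtain ⟨-, -, hopen, -, -, hadd⟩ := hΓ
  intro lam mu hle hlam
  have hcont : Continuous fun t : ℝ => lam - t • (1 : Fin n → ℝ) := by fun_prop
  have hnear : ∀ᶠ t in 𝓝[>] (0 : ℝ), lam - t • (1 : Fin n → ℝ) ∈ Γ :=
    (hcont.tendsto' 0 lam (by simp)).mono_left nhdsWithin_le_nhds (hopen.mem_nhds hlam)
  obtain ⟨t, hmem, ht : 0 < t⟩ := (hnear.and self_mem_nhdsWithin).exists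
  have hpos : mu - (lam - t • 1) ∈ GammaN n := fun i => by
    have hi := hle i
    simp only [Pi.sub_apply, Pi.smul_apply, Pi.one_apply, smul_eq_mul]
    linarith
  simpa using hadd _ hmem _ hpos

lemma zero_notMem_s7 (hΓ : CondC Γ) : 0 ∉ Γ := by
  obtain ⟨-, hne_univ, hopen, -, hsmul, -⟩ := hΓ
  intro hzero
  refine hne_univ (eq_univ_of_forall fun lam => ?_)
  have hcont : Continuous fun t : ℝ => t • lam := by fun_prop
  have hnear : ∀ᶠ t in 𝓝[>] (0 : ℝ), t • lam ∈ Γ :=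
    (hcont.tendsto' 0 0 (by simp)).mono_left nhdsWithin_le_nhds (hopen.mem_nhds hzero)
  obtain ⟨t, hmem, ht : 0 < t⟩ := (hnear.and self_mem_nhdsWithin).exists
  simpa [smul_smul, ht.ne'] using hsmul _ hmem t⁻¹ (inv_pos.2 ht)

lemma notMem_of_nonpos (hΓ : CondC Γ) {lam : Fin n → ℝ} (h : lam ≤ 0) : lam ∉ Γ :=
  fun hlam => hΓ.zero_notMem_s7 (hΓ.isUpperSet_s7 h hlam)

lemma smul_comp_perm_mem_closure (hΓ : CondC Γ) {lam : Fin n → ℝ} (hlam : lam ∈ closure Γ)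
    (σ : Equiv.Perm (Fin n)) {t : ℝ} (ht : 0 < t) : t • (lam ∘ σ) ∈ closure Γ := by
  obtain ⟨-, -, -, hperm, hsmul, -⟩ := hΓ
  exact map_mem_closure (f := fun y => t • (y ∘ σ)) (by fun_prop) hlam
    fun y hy => hsmul _ (hperm σ y hy) t ht

lemma update_mem_closure (hΓ : CondC Γ) (hmu : MuPlusEqTop Γ) (i₀ : Fin n) {c ε : ℝ}
    (hc : 0 < c) (hε : 0 < ε) : Function.update (fun _ => ε) i₀ (-c) ∈ closure Γ := by
  have : NeZero n := ⟨i₀.pos.ne'⟩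
  convert! hΓ.smul_comp_perm_mem_closure (hmu (c / ε) (by positivity)) (Equiv.swap 0 i₀) hε using 1
  ext i
  rcases eq_or_ne i i₀ with rfl | hi
  · simp only [Function.update_self, Fin.val_eq_zero_iff, Pi.smul_apply, Function.comp_apply,
      Equiv.swap_apply_right, ↓reduceIte, smul_eq_mul, mul_neg, neg_inj]
    field_simp
  · have hswap : Equiv.swap 0 i₀ i ≠ 0 := fun h => hi (by simpa using congrArg (Equiv.swap 0 i₀) h)
    simp [hi, hswap]

lemma mem_closure_of_forall_ne_nonneg (hΓ : CondC Γ) (hmu : MuPlusEqTop Γ) {lam : Fin n → ℝ}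
    (i₀ : Fin n) (h : ∀ i ≠ i₀, 0 ≤ lam i) : lam ∈ closure Γ := by
  have hshift (ε : ℝ) (hε : 0 < ε) : lam + ε • 1 ∈ closure Γ := by
    refine hΓ.isUpperSet_s7.closure ?_
      (hΓ.update_mem_closure hmu i₀ (c := |lam i₀| + 1) (by positivity) hε)
    refine update_le_iff.2 ⟨?_, fun i hi => by simpa using h i hi⟩
    simp only [Pi.add_apply, Pi.smul_apply, Pi.one_apply, smul_eq_mul]
    linarith [neg_abs_le (lam i₀)]
  have hcont : Continuous fun ε : ℝ => lam + ε • (1 : Fin n → ℝ) := by fun_prop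
  exact isClosed_closure.mem_of_tendsto
    ((hcont.tendsto' 0 lam (by simp)).mono_left (nhdsWithin_le_nhds (s := Ioi 0)))
    (eventually_mem_nhdsWithin.mono hshift)

end CondC

section Mobius

open Matrix

variable {n : ℕ} {φ v : Euc n → ℝ} {x : Euc n}

lemma phess_eq_fderiv_fderiv (hφ : ContDiffAt ℝ 2 φ x) (i j : Fin n) :
    phess φ x i j =
      fderiv ℝ (fderiv ℝ φ) x (EuclideanSpace.single i 1) (EuclideanSpace.single j 1) :=
  (fderiv_fderiv_apply hφ _ _).symm

lemma isHermitian_mobius (hφ : ContDiffAt ℝ 2 φ x) : (mobius φ x).IsHermitian := by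
  have hsymm : IsSymmSndFDerivAt ℝ φ x := hφ.isSymmSndFDerivAt (by simp)
  ext i j
  simp only [mobius, conjTranspose_apply, Matrix.smul_apply, of_apply, phess_eq_fderiv_fderiv hφ,
    star_trivial, smul_eq_mul, hsymm.eq (EuclideanSpace.single j 1), mul_comm (pgrad φ x j),
    eq_comm (a := j)]

lemma sum_mul_apply_single (L : Euc n →L[ℝ] ℝ) (a : Euc n) :
    ∑ i, a i * L (EuclideanSpace.single i 1) = L a := by
  conv_rhs => rw [← (EuclideanSpace.basisFun (Fin n) ℝ).sum_repr a]
  simp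

lemma sum_pgrad_sq (φ : Euc n → ℝ) (x : Euc n) :
    ∑ k, pgrad φ x k ^ 2 = ‖fderiv ℝ φ x‖ ^ 2 := by
  simp [(EuclideanSpace.basisFun (Fin n) ℝ).norm_dual, pgrad]

lemma sum_mul_phess (hφ : ContDiffAt ℝ 2 φ x) (a : Euc n) :
    ∑ i, ∑ j, a i * phess φ x i j * a j = fderiv ℝ (fderiv ℝ φ) x a a := by
  rw [← sum_mul_apply_single (fderiv ℝ (fderiv ℝ φ) x a), Finset.sum_comm]
  refine Finset.sum_congr rfl fun j _ => ?_
  rw [← ContinuousLinearMap.flip_apply, ← sum_mul_apply_single, Finset.mul_sum]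
  refine Finset.sum_congr rfl fun i _ => ?_
  rw [phess_eq_fderiv_fderiv hφ, ContinuousLinearMap.flip_apply]
  ring

lemma sum_mul_pgrad_mul_pgrad (φ : Euc n → ℝ) (x a : Euc n) :
    ∑ i, ∑ j, a i * (pgrad φ x i * pgrad φ x j) * a j = fderiv ℝ φ x a ^ 2 := by
  rw [sq, ← sum_mul_apply_single, Finset.sum_mul_sum]
  refine Finset.sum_congr rfl fun i _ => Finset.sum_congr rfl fun j _ => ?_
  rw [pgrad, pgrad]
  ring

lemma dotProduct_mobius_mulVec (hφ : ContDiffAt ℝ 2 φ x) (a : Euc n) :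
    a.ofLp ⬝ᵥ mobius φ x *ᵥ a.ofLp = Real.exp (-2 * φ x) *
      (-fderiv ℝ (fderiv ℝ φ) x a a + fderiv ℝ φ x a ^ 2
        - 1 / 2 * ‖fderiv ℝ φ x‖ ^ 2 * ‖a‖ ^ 2) := by
  have hnorm : ‖a‖ ^ 2 = ∑ i, ∑ j, a i * (if i = j then 1 else 0) * a j := by
    rw [EuclideanSpace.real_norm_sq_eq]
    simp [sq]
  rw [hnorm, ← sum_mul_phess hφ, ← sum_mul_pgrad_mul_pgrad]
  simp only [mobius, sum_pgrad_sq, dotProduct, mulVec, Matrix.smul_apply, of_apply, smul_eq_mul,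
    Finset.mul_sum, ← Finset.sum_neg_distrib, ← Finset.sum_add_distrib, ← Finset.sum_sub_distrib]
  refine Finset.sum_congr rfl fun i _ => Finset.sum_congr rfl fun j _ => ?_
  ring

lemma dotProduct_mobius_mulVec_le_of_eventually_le (hφ : ContDiffAt ℝ 2 φ x)
    (hv : ContDiffAt ℝ 2 v x) (heq : φ x = v x) (hle : v ≤ᶠ[𝓝 x] φ) (a : Euc n) :
    a.ofLp ⬝ᵥ mobius φ x *ᵥ a.ofLp ≤ a.ofLp ⬝ᵥ mobius v x *ᵥ a.ofLp := by
  have hmax : IsLocalMax (v - φ) x := by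
    filter_upwards [hle] with y hy
    simpa [heq] using hy
  have hfst : fderiv ℝ v x = fderiv ℝ φ x := by
    have hzero := hmax.fderiv_eq_zero
    rwa [fderiv_sub (hv.differentiableAt two_ne_zero) (hφ.differentiableAt two_ne_zero),
      sub_eq_zero] at hzero
  have hsnd := fderiv_fderiv_nonpos_of_isLocalMax hmax (hv.sub hφ) a
  rw [fderiv_fderiv_sub hv hφ, _root_.sub_apply, _root_.sub_apply, sub_nonpos] at hsnd
  rw [dotProduct_mobius_mulVec hφ, dotProduct_mobius_mulVec hv, heq, hfst]
  gcongr

lemma dotProduct_mobius_mulVec_const_sub_two_mul_log_norm (C : ℝ) (hx : x ≠ 0) (a : Euc n) :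
    a.ofLp ⬝ᵥ mobius (fun y => C - 2 * Real.log ‖y‖) x *ᵥ a.ofLp = 0 := by
  have hfst : fderiv ℝ (fun y : Euc n => C - 2 * Real.log ‖y‖) =ᶠ[𝓝 x]
      (-2 : ℝ) • fderiv ℝ fun y : Euc n => Real.log ‖y‖ := by
    filter_upwards [isOpen_ne.mem_nhds hx] with y hy
    have hlog := hasFDerivAt_log_norm hy
    rw [((hlog.const_mul 2).const_sub C).fderiv, Pi.smul_apply, hlog.fderiv, neg_smul]
  have hsnd := hfst.fderiv_eq.trans (fderiv_const_smul
    (differentiableAt_fderiv_of_contDiffAt_two (contDiffAt_log_norm hx)) (-2))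
  have hgrad := hfst.self_of_nhds
  rw [Pi.smul_apply, (hasFDerivAt_log_norm hx).fderiv] at hgrad
  have hx' : ‖x‖ ≠ 0 := norm_ne_zero_iff.2 hx
  rw [dotProduct_mobius_mulVec
    (contDiffAt_const.sub (contDiffAt_const.mul (contDiffAt_log_norm hx))), hsnd, hgrad]
  simp only [_root_.smul_apply, smul_eq_mul, fderiv_fderiv_log_norm hx, real_inner_self_eq_norm_sq,
    innerSL_apply_apply, norm_smul, innerSL_apply_norm, norm_neg, Real.norm_ofNat, norm_inv,
    norm_pow, norm_norm]
  field_simp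
  ring

lemma dotProduct_mobius_mulVec_const (C : ℝ) (x a : Euc n) :
    a.ofLp ⬝ᵥ mobius (fun _ => C) x *ᵥ a.ofLp = 0 := by
  simp [dotProduct_mobius_mulVec contDiffAt_const]

lemma dotProduct_mobius_mulVec_nonneg_of_le_radial {f : ℝ → ℝ} (hx : x ≠ 0)
    (hf : AntitoneOn f (Ioi 0)) (hf_log : MonotoneOn (fun r => f r + 2 * Real.log r) (Ioi 0))
    (hφ : ContDiffAt ℝ 2 φ x) (heq : φ x = f ‖x‖) (hle : ∀ᶠ y in 𝓝 x, φ y ≤ f ‖y‖)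
    {a : Euc n} (ha : inner ℝ x a = 0) : 0 ≤ a.ofLp ⬝ᵥ mobius φ x *ᵥ a.ofLp := by
  have hdiff := hφ.differentiableAt two_ne_zero
  have hmax := isLocalMaxOn_of_le_antitoneOn_norm hx hf heq hle
  have hsphere : IsLocalMaxOn φ (sphere 0 ‖x‖) x :=
    hmax.on_subset fun y hy => (mem_sphere_zero_iff_norm.1 hy).ge
  set p := fderiv ℝ φ x x / ‖x‖ ^ 2 with hp
  have hgrad : fderiv ℝ φ x = p • innerSL ℝ x := eq_smul_innerSL_of_forall_inner_eq_zero
    fun w hw => fderiv_eq_zero_of_isLocalMaxOn_sphere hx hdiff hsphere hw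
  have hhess : fderiv ℝ (fderiv ℝ φ) x a a ≤ p * ‖a‖ ^ 2 :=
    fderiv_fderiv_le_of_isLocalMaxOn_sphere hx hφ hsphere ha
  have hp_nonpos : p ≤ 0 :=
    div_nonpos_of_nonpos_of_nonneg (fderiv_self_nonpos_of_isLocalMaxOn hdiff hmax) (by positivity)
  have hp_lower : -2 ≤ p * ‖x‖ ^ 2 := by
    rw [hp, div_mul_cancel₀ _ (by simpa using hx)]
    exact neg_two_le_fderiv_self_of_le_norm hx hdiff hf_log heq hle
  have hnorm : ‖fderiv ℝ φ x‖ ^ 2 = p ^ 2 * ‖x‖ ^ 2 := by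
    rw [hgrad, norm_smul, innerSL_apply_norm, mul_pow, Real.norm_eq_abs, sq_abs]
  have hfst : fderiv ℝ φ x a = 0 := fderiv_eq_zero_of_isLocalMaxOn_sphere hx hdiff hsphere ha
  rw [dotProduct_mobius_mulVec hφ, hnorm, hfst]
  refine mul_nonneg (Real.exp_pos _).le ?_
  calc 0 ≤ -p * (1 + p * ‖x‖ ^ 2 / 2) * ‖a‖ ^ 2 :=
        mul_nonneg (mul_nonneg (by linarith) (by linarith)) (by positivity)
    _ = -(p * ‖a‖ ^ 2) + 0 ^ 2 - 1 / 2 * (p ^ 2 * ‖x‖ ^ 2) * ‖a‖ ^ 2 := by ring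
    _ ≤ _ := by gcongr

end Mobius

section ViscositySolutions

open Matrix

variable {n : ℕ} {Γ : Set (Fin n → ℝ)} {Ω : Set (Euc n)} {v w : Euc n → ℝ}

lemma Subsol.max (hv : Subsol Γ Ω v) (hw : Subsol Γ Ω w) :
    Subsol Γ Ω fun x => max (v x) (w x) := by
  intro x hx φ hφ heq hle
  rcases max_choice (v x) (w x) with hmax | hmax
  · exact hv x hx φ hφ (heq.trans hmax) (hle.mono fun y hy => (le_max_left _ _).trans hy)
  · exact hw x hx φ hφ (heq.trans hmax) (hle.mono fun y hy => (le_max_right _ _).trans hy)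

lemma subsol_of_dotProduct_mobius_mulVec_nonpos (hΓ : CondC Γ) (hΩ : IsOpen Ω)
    (hv : ∀ x ∈ Ω, ContDiffAt ℝ 2 v x)
    (hnonpos : ∀ x ∈ Ω, ∀ a : Euc n, a.ofLp ⬝ᵥ mobius v x *ᵥ a.ofLp ≤ 0) : Subsol Γ Ω v := by
  intro x hx φ hφ heq hle
  rw [hΩ.nhdsWithin_eq hx] at hle
  refine ⟨isHermitian_mobius hφ.contDiffAt, hΓ.notMem_of_nonpos ?_⟩
  exact eigenvalues_nonpos_of_dotProduct_mulVec_nonpos _ fun a =>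
    (dotProduct_mobius_mulVec_le_of_eventually_le hφ.contDiffAt (hv x hx) heq hle
      (WithLp.toLp 2 a)).trans (hnonpos x hx _)

lemma subsol_const (hΓ : CondC Γ) (hΩ : IsOpen Ω) (C : ℝ) : Subsol Γ Ω fun _ => C :=
  subsol_of_dotProduct_mobius_mulVec_nonpos hΓ hΩ (fun _ _ => contDiffAt_const)
    fun x _ a => (dotProduct_mobius_mulVec_const C x a).le

lemma subsol_const_sub_two_mul_log_norm (hΓ : CondC Γ) (C : ℝ) :
    Subsol Γ {0}ᶜ fun x => C - 2 * Real.log ‖x‖ :=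
  subsol_of_dotProduct_mobius_mulVec_nonpos hΓ isOpen_compl_singleton
    (fun _ hx => contDiffAt_const.sub (contDiffAt_const.mul (contDiffAt_log_norm hx)))
    fun _ hx a => (dotProduct_mobius_mulVec_const_sub_two_mul_log_norm C hx a).le

lemma eigIn_closure_of_dotProduct_mulVec_nonneg (hΓ : CondC Γ) (hmu : MuPlusEqTop Γ)
    {M : Matrix (Fin n) (Fin n) ℝ} (hM : M.IsHermitian) {x : Euc n} (hx : x ≠ 0)
    (h : ∀ a : Euc n, inner ℝ x a = 0 → 0 ≤ a.ofLp ⬝ᵥ M *ᵥ a.ofLp) : EigIn M (closure Γ) := by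
  refine ⟨hM, ?_⟩
  obtain ⟨i, hi⟩ : ∃ i, ∀ j ≠ i, 0 ≤ hM.eigenvalues j := by
    by_cases hneg : ∃ i, hM.eigenvalues i < 0
    · obtain ⟨i, hi⟩ := hneg
      exact ⟨i, fun j hj => eigenvalues_nonneg_of_neg_of_ne hM x h hj.symm hi⟩
    · push Not at hneg
      obtain ⟨i, -⟩ : ∃ i, x i ≠ 0 := by
        by_contra! hzero
        exact hx (PiLp.ext hzero)
      exact ⟨i, fun j _ => hneg j⟩
  exact hΓ.mem_closure_of_forall_ne_nonneg hmu i hi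

lemma supersol_comp_norm (hΓ : CondC Γ) (hmu : MuPlusEqTop Γ) {f : ℝ → ℝ}
    (hf : AntitoneOn f (Ioi 0)) (hf_log : MonotoneOn (fun r => f r + 2 * Real.log r) (Ioi 0)) :
    Supersol Γ {0}ᶜ fun x => f ‖x‖ := by
  intro x hx φ hφ heq hle
  rw [isOpen_compl_singleton.nhdsWithin_eq hx] at hle
  exact eigIn_closure_of_dotProduct_mulVec_nonneg hΓ hmu (isHermitian_mobius hφ.contDiffAt) hx
    fun a ha => dotProduct_mobius_mulVec_nonneg_of_le_radial hx hf hf_log hφ.contDiffAt heq hle ha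

end ViscositySolutions

section MaxLog

variable (C₁ C₂ : ℝ)

lemma antitoneOn_max_const_sub_two_mul_log :
    AntitoneOn (fun r => max (C₁ - 2 * Real.log r) C₂) (Ioi 0) := by
  intro r hr s _ hrs
  have hlog := Real.log_le_log hr hrs
  exact max_le_max_right _ (by linarith)

lemma monotoneOn_max_const_sub_two_mul_log_add_two_mul_log :
    MonotoneOn (fun r => max (C₁ - 2 * Real.log r) C₂ + 2 * Real.log r) (Ioi 0) := by
  intro r hr s _ hrs
  have hlog := Real.log_le_log hr hrs
  simp only [max_add, sub_add_cancel]
  exact max_le_max_left _ (by linarith)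

end MaxLog

/-- **A non-smooth radial viscosity solution** (Lemma 3.2): if `Γ` satisfies condition (C)
with `μ_Γ⁺ = +∞`, i.e. `(-c,1,…,1) ∈ closure Γ` for every `c > 0`, then for all constants
`C₁, C₂`, the function `v(x) = max (C₁ - 2 log |x|) C₂` is a continuous viscosity solution
of `λ(A[v]) ∈ ∂Γ` on `ℝⁿ ∖ {0}`. -/
theorem max_log_viscosity_solution
    {n : ℕ} (hn : 2 ≤ n) (Γ : Set (Fin n → ℝ)) (hΓ : CondC Γ)
    (hmu : ∀ c : ℝ, 0 < c → (fun i : Fin n => if i.val = 0 then -c else 1) ∈ closure Γ)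
    (C₁ C₂ : ℝ) (v : Euc n → ℝ)
    (hv : v = fun x => max (C₁ - 2 * Real.log ‖x‖) C₂) :
    ContinuousOn v {(0 : Euc n)}ᶜ ∧
      Supersol Γ {(0 : Euc n)}ᶜ v ∧ Subsol Γ {(0 : Euc n)}ᶜ v := by
  subst hv
  refine ⟨fun x hx => ContinuousAt.continuousWithinAt ?_, ?_, ?_⟩
  · exact (contDiffAt_const.sub (contDiffAt_const.mul (contDiffAt_log_norm hx))).continuousAt.max
      continuousAt_const
  · exact supersol_comp_norm hΓ hmu (antitoneOn_max_const_sub_two_mul_log C₁ C₂)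
      (monotoneOn_max_const_sub_two_mul_log_add_two_mul_log C₁ C₂)
  · exact (subsol_const_sub_two_mul_log_norm hΓ C₁).max
      (subsol_const hΓ isOpen_compl_singleton C₂)
end
end
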